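/- For all integers b > a ≥ 1 with gcd(a,b) = 1, the number π*(a,b) of primes not representable as au + bv with u, v nonnegative integers satisfies π*(a,b) ≥ 0.04 · π(S(a,b)), where S(a,b) = ab − a − b and π(x) is the number of primes not exceeding x. -/

import Mathlib

/-- `piStar a b` is the number of primes not representable as `a*u + b*v`
with `u, v` nonnegative integers, i.e. the number of primes not in the
numerical semigroup `⟨a, b⟩`. -/
noncomputable def piStar (a b : ℕ) : ℕ :=
  Set.ncard {p : ℕ | p.Prime ∧ ¬ ∃ u v : ℕ, p = a * u + b * v}

/-- `S a b = a*b - a - b` (the Frobenius-type quantity). -/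
def S (a b : ℕ) : ℕ := a * b - a - b

open Real Finset
open Nat (primeCounting)

/-!
The primes up to `V b` with `V = ⌈0.12 a⌉` that lie in `⟨a, b⟩` are distributed over the `V` rows
`{a u + b v : u}` with `v < V`. On row `v`, at most a fixed proportion of the terms can be prime:
a row with `v` not coprime to `a` contains no prime besides `a`, and the others are arithmetic
progressions, to which one applies the sieve by `2, 3, 5` or, for `b ≥ 3·10⁷`, Selberg's sieve of
level about `b^{1/3}`. Removing the rows from the `π(V b)` primes bounds `piStar a b` from below,
and the explicit Chebyshev bounds `0.92129 x / log x ≲ π(x) ≲ 1.1135 x / log x` compare `π(V b)`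
with `π(a b)`. When `a ≤ 18` there are too few rows, but every prime below `b` other than `a` is
missing from `⟨a, b⟩`; small values of `a b` are settled by computation.
-/

section ChebyshevBounds

open Chebyshev
open scoped ArithmeticFunction.vonMangoldt ArithmeticFunction.zeta

theorem mul_log_le_mul_log_add_sub {x y : ℝ} (hx : 0 < x) (hy : 0 < y) :
    y * log x ≤ y * log y + (x - y) := by
  have h := log_le_sub_one_of_pos (div_pos hx hy)
  rw [log_div hx.ne' hy.ne'] at h
  calc y * log x ≤ y * (log y + (x / y - 1)) := by gcongr; linarith
    _ = y * log y + (x - y) := by field_simp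

theorem mul_log_succ_sub_le_log_factorial (n : ℕ) :
    (n : ℝ) * log (n + 1) - n ≤ log (n.factorial : ℝ) := by
  induction n with
  | zero => simp
  | succ k ih =>
    have htangent := mul_log_le_mul_log_add_sub (x := (k : ℝ) + 1 + 1) (y := k + 1)
      (by positivity) (by positivity)
    rw [Nat.factorial_succ]
    push_cast
    rw [log_mul (by positivity) (by positivity)]
    linarith

theorem log_factorial_le_mul_log_sub_add {n : ℕ} (hn : 1 ≤ n) :
    log (n.factorial : ℝ) ≤ n * log n - n + 1 + log n := by
  induction n, hn using Nat.le_induction with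
  | base => simp
  | succ k hk ih =>
    have htangent := mul_log_le_mul_log_add_sub (x := (k : ℝ)) (y := k + 1)
      (by positivity) (by positivity)
    rw [Nat.factorial_succ]
    push_cast
    rw [log_mul (by positivity) (by positivity)]
    linarith

theorem log_factorial_le_of_le {n : ℕ} {y : ℝ} (hn : 1 ≤ n) (hny : (n : ℝ) ≤ y) :
    log (n.factorial : ℝ) ≤ y * log y - y + 1 + log y := by
  have hn' : (1 : ℝ) ≤ n := by exact_mod_cast hn
  have hlog : log n ≤ log y := log_le_log (by linarith) hny
  have htangent := mul_log_le_mul_log_add_sub (x := (n : ℝ)) (y := y) (by linarith) (by linarith)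
  have hmul : (n : ℝ) * log n ≤ y * log n := by gcongr
  linarith [log_factorial_le_mul_log_sub_add hn]

theorem le_log_factorial_of_le_of_le {n : ℕ} {y : ℝ} (hn : 2 ≤ n) (hny : (n : ℝ) ≤ y)
    (hyn : y ≤ n + 1) : y * log y - y + 1 - log y ≤ log (n.factorial : ℝ) := by
  have hn' : (2 : ℝ) ≤ n := by exact_mod_cast hn
  have hone : 1 ≤ log ((n : ℝ) + 1) := by
    rw [le_log_iff_exp_le (by linarith)]
    linarith [exp_one_lt_d9]
  have hlog : (y - 1) * log y ≤ (y - 1) * log (n + 1) :=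
    mul_le_mul_of_nonneg_left (log_le_log (by linarith) hyn) (by linarith)
  have hgap : (n + 1 - y) * 1 ≤ (n + 1 - y) * log (n + 1) :=
    mul_le_mul_of_nonneg_left hone (by linarith)
  linarith [mul_log_succ_sub_le_log_factorial n]

theorem log_factorial_eq_sum_vonMangoldt {N M : ℕ} (h : N ≤ M) :
    log (N.factorial : ℝ) = ∑ d ∈ Ioc 0 M, Λ d * ((N / d : ℕ) : ℝ) := by
  calc log (N.factorial : ℝ) = ∑ n ∈ Ioc 0 N, (Λ * (ζ : ArithmeticFunction ℝ)) n := by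
        rw [ArithmeticFunction.vonMangoldt_mul_zeta]
        induction N with
        | zero => simp
        | succ k ih =>
          rw [Nat.factorial_succ, Nat.cast_mul, log_mul (by positivity) (by positivity),
            ih (by omega), sum_Ioc_succ_top (by omega), add_comm, ArithmeticFunction.log_apply]
    _ = ∑ d ∈ Ioc 0 N, Λ d * ((N / d : ℕ) : ℝ) := ArithmeticFunction.sum_Ioc_mul_zeta_eq_sum _ _
    _ = ∑ d ∈ Ioc 0 M, Λ d * ((N / d : ℕ) : ℝ) := by
        refine sum_subset (Ioc_subset_Ioc_right h) fun d hdM hdN ↦ ?_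
        simp only [mem_Ioc] at hdM hdN
        rw [Nat.div_eq_of_lt (by omega), Nat.cast_zero, mul_zero]

/-- The logarithm of Chebyshev's quotient `N! (N/30)! / ((N/2)! (N/3)! (N/5)!)`, with floored
arguments. -/
noncomputable def logChebyshevQuotient (N : ℕ) : ℝ :=
  log (N.factorial : ℝ) - log ((N / 2).factorial : ℝ) - log ((N / 3).factorial : ℝ)
    - log ((N / 5).factorial : ℝ) + log ((N / 30).factorial : ℝ)

/-- The multiplicity `⌊k⌋ - ⌊k/2⌋ - ⌊k/3⌋ - ⌊k/5⌋ + ⌊k/30⌋` with which `Λ d`, `k = ⌊N/d⌋`, occurs in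
`logChebyshevQuotient N`. -/
def chebyshevCoeff (k : ℕ) : ℤ := (k : ℤ) - (k / 2 : ℕ) - (k / 3 : ℕ) - (k / 5 : ℕ) + (k / 30 : ℕ)

theorem chebyshevCoeff_le_one (k : ℕ) : chebyshevCoeff k ≤ 1 := by
  unfold chebyshevCoeff; omega

theorem chebyshevCoeff_nonneg (k : ℕ) : 0 ≤ chebyshevCoeff k := by
  unfold chebyshevCoeff; omega

theorem chebyshevCoeff_eq_one {k : ℕ} (h1 : 1 ≤ k) (h5 : k ≤ 5) : chebyshevCoeff k = 1 := by
  unfold chebyshevCoeff; omega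

theorem logChebyshevQuotient_eq_sum (N : ℕ) :
    logChebyshevQuotient N = ∑ d ∈ Ioc 0 N, Λ d * (chebyshevCoeff (N / d) : ℝ) := by
  have hdiv (k : ℕ) : log ((N / k).factorial : ℝ) = ∑ d ∈ Ioc 0 N, Λ d * ((N / d / k : ℕ) : ℝ) := by
    simp_rw [Nat.div_right_comm N _ k]
    exact log_factorial_eq_sum_vonMangoldt (Nat.div_le_self N k)
  rw [logChebyshevQuotient, log_factorial_eq_sum_vonMangoldt le_rfl, hdiv, hdiv, hdiv, hdiv,
    ← sum_sub_distrib, ← sum_sub_distrib, ← sum_sub_distrib, ← sum_add_distrib]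
  refine sum_congr rfl fun d _ ↦ ?_
  simp only [chebyshevCoeff, Int.cast_add, Int.cast_sub, Int.cast_natCast]
  ring

theorem logChebyshevQuotient_le_psi (N : ℕ) : logChebyshevQuotient N ≤ ψ N := by
  rw [logChebyshevQuotient_eq_sum, psi, Nat.floor_natCast]
  refine sum_le_sum fun d _ ↦ mul_le_of_le_one_right ArithmeticFunction.vonMangoldt_nonneg ?_
  exact_mod_cast chebyshevCoeff_le_one (N / d)

theorem theta_sub_theta_div_six_le (N : ℕ) :
    θ N - θ (N / 6 : ℕ) ≤ logChebyshevQuotient N := by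
  set P := (Ioc 0 N).filter Nat.Prime
  set P' := (Ioc 0 (N / 6)).filter Nat.Prime
  have hsub : P' ⊆ P := filter_subset_filter _ (Ioc_subset_Ioc_right (Nat.div_le_self N 6))
  calc θ N - θ (N / 6 : ℕ) = ∑ p ∈ P \ P', log (p : ℝ) := by
        rw [theta, theta, Nat.floor_natCast, Nat.floor_natCast, sub_eq_iff_eq_add,
          sum_sdiff hsub]
    _ = ∑ p ∈ P \ P', Λ p * (chebyshevCoeff (N / p) : ℝ) := by
        refine sum_congr rfl fun p hp ↦ ?_
        simp only [P, P', mem_sdiff, mem_filter, mem_Ioc] at hp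
        obtain ⟨⟨⟨hp0, hpN⟩, hprime⟩, hp6⟩ := hp
        have hlarge : N < 6 * p := by
          by_contra
          exact hp6 ⟨⟨hp0, by omega⟩, hprime⟩
        have hquot : N / p < 6 := (Nat.div_lt_iff_lt_mul hp0).2 hlarge
        rw [ArithmeticFunction.vonMangoldt_apply_prime hprime,
          chebyshevCoeff_eq_one ((Nat.one_le_div_iff hp0).2 hpN) (by omega), Int.cast_one, mul_one]
    _ ≤ ∑ d ∈ Ioc 0 N, Λ d * (chebyshevCoeff (N / d) : ℝ) := by
        refine sum_le_sum_of_subset_of_nonneg (sdiff_subset.trans (filter_subset _ _)) fun d _ _ ↦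
          mul_nonneg ArithmeticFunction.vonMangoldt_nonneg ?_
        exact_mod_cast chebyshevCoeff_nonneg _
    _ = logChebyshevQuotient N := (logChebyshevQuotient_eq_sum N).symm

/-- Chebyshev's constant, the limit of `logChebyshevQuotient N / N`. -/
noncomputable def chebyshevConst : ℝ := log 2 / 2 + log 3 / 3 + log 5 / 5 - log 30 / 30

theorem log_thirty_eq : log (30 : ℝ) = log 2 + log 3 + log 5 := by
  rw [← log_mul (by norm_num) (by norm_num), ← log_mul (by norm_num) (by norm_num)]
  norm_num

theorem chebyshevConst_gt : 0.92129 < chebyshevConst := by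
  rw [chebyshevConst, log_thirty_eq]
  linarith [log_two_gt_d9, log_three_gt_d9, log_five_gt_d9]

theorem chebyshevConst_lt : chebyshevConst < 0.9213 := by
  rw [chebyshevConst, log_thirty_eq]
  linarith [log_two_lt_d9, log_three_lt_d9, log_five_lt_d9]

theorem cast_div_le_and_le_add_one (N : ℕ) {k : ℕ} (hk : 0 < k) :
    ((N / k : ℕ) : ℝ) ≤ (N : ℝ) / k ∧ (N : ℝ) / k ≤ ((N / k : ℕ) : ℝ) + 1 := by
  rw [← Nat.floor_div_eq_div (K := ℝ)]
  exact ⟨Nat.floor_le (by positivity), (Nat.lt_floor_add_one _).le⟩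

theorem log_factorial_div_bounds {N k : ℕ} (hk : 0 < k) (hkN : 2 * k ≤ N) :
    (N : ℝ) / k * (log N - log k) - N / k + 1 - (log N - log k) ≤ log ((N / k).factorial : ℝ) ∧
    log ((N / k).factorial : ℝ) ≤
      (N : ℝ) / k * (log N - log k) - N / k + 1 + (log N - log k) := by
  have hN : 0 < N := by omega
  have hquot : 2 ≤ N / k := (Nat.le_div_iff_mul_le hk).2 hkN
  obtain ⟨hle, hge⟩ := cast_div_le_and_le_add_one N hk
  rw [← log_div (by positivity) (by positivity)]
  exact ⟨le_log_factorial_of_le_of_le hquot hle hge, log_factorial_le_of_le (by omega) hle⟩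

theorem logChebyshevQuotient_bounds {N : ℕ} (hN : 60 ≤ N) :
    chebyshevConst * N - 5 * log N + 5 ≤ logChebyshevQuotient N ∧
    logChebyshevQuotient N ≤ chebyshevConst * N + 5 * log N - 7 := by
  obtain ⟨l1, u1⟩ := log_factorial_div_bounds (N := N) one_pos (by omega)
  obtain ⟨l2, u2⟩ := log_factorial_div_bounds (N := N) two_pos (by omega)
  obtain ⟨l3, u3⟩ := log_factorial_div_bounds (N := N) three_pos (by omega)
  obtain ⟨l5, u5⟩ := log_factorial_div_bounds (N := N) (k := 5) (by omega) (by omega)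
  obtain ⟨l30, u30⟩ := log_factorial_div_bounds (N := N) (k := 30) (by omega) (by omega)
  simp only [Nat.div_one, Nat.cast_one, Nat.cast_ofNat, div_one, log_one, sub_zero]
    at l1 u1 l2 u2 l3 u3 l5 u5 l30 u30
  rw [logChebyshevQuotient, chebyshevConst]
  rw [log_thirty_eq] at *
  constructor <;>
    linarith [log_two_gt_d9, log_three_gt_d9, log_five_gt_d9,
      log_two_lt_d9, log_three_lt_d9, log_five_lt_d9]

theorem le_primeCounting_mul_log {N : ℕ} (hN : 60 ≤ N) :
    0.92129 * N - 5 * log N ≤ (primeCounting N : ℝ) * log N := by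
  have hconst : 0.92129 * (N : ℝ) ≤ chebyshevConst * N := by gcongr; exact chebyshevConst_gt.le
  linarith [(logChebyshevQuotient_bounds hN).1, logChebyshevQuotient_le_psi N,
    psi_le_primeCounting_mul_log N]

theorem log_four_lt : log (4 : ℝ) < 1.3863 := by
  rw [log_four_eq]
  linarith [log_two_lt_d9]

theorem theta_le {N : ℕ} (hN : 2000 ≤ N) : θ N ≤ 1.1135 * N + 10 * log N := by
  have hupper {n : ℕ} (hn : 60 ≤ n) : θ n ≤ 0.9213 * n + 5 * log n - 7 + θ (n / 6 : ℕ) := by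
    have hconst : chebyshevConst * (n : ℝ) ≤ 0.9213 * n := by gcongr; exact chebyshevConst_lt.le
    linarith [(logChebyshevQuotient_bounds hn).2, theta_sub_theta_div_six_le n]
  have htail : θ (N / 6 / 6 : ℕ) ≤ 1.3863 * (N / 6 / 6 : ℕ) :=
    (theta_le_log4_mul_x (Nat.cast_nonneg _)).trans (by gcongr; exact log_four_lt.le)
  have hlog : log ((N / 6 : ℕ) : ℝ) ≤ log N :=
    log_le_log (Nat.cast_pos.2 (by omega)) (Nat.cast_le.2 (Nat.div_le_self N 6))
  have hdiv := (cast_div_le_and_le_add_one N (k := 6) (by omega)).1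
  have hdiv' := (cast_div_le_and_le_add_one (N / 6) (k := 6) (by omega)).1
  push_cast at hdiv hdiv'
  linarith [hupper (n := N) (by omega), hupper (n := N / 6) (by omega)]

theorem primeCounting_256 : primeCounting 256 = 54 := by decide +kernel

theorem two_pow_le_primorial_256 : 2 ^ 300 ≤ primorial 256 := by decide +kernel

theorem log_256_eq : log (256 : ℝ) = 8 * log 2 := by
  rw [show (256 : ℝ) = 2 ^ 8 by norm_num, log_pow, Nat.cast_ofNat]

theorem lt_log_of_256_le {t : ℝ} (ht : 256 ≤ t) : 5.545 < log t := by
  have hmono : log 256 ≤ log t := log_le_log (by norm_num) ht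
  rw [log_256_eq] at hmono
  linarith [log_two_gt_d9]

theorem theta_256_ge : 207 ≤ θ 256 := by
  have hcast : ((2 : ℝ) ^ 300) ≤ primorial 256 := by exact_mod_cast two_pow_le_primorial_256
  have hlog := log_le_log (by positivity) hcast
  rw [log_pow, Nat.cast_ofNat] at hlog
  rw [theta_eq_log_primorial, Nat.floor_ofNat]
  linarith [log_two_gt_d9]

theorem integral_theta_div_log_sq_two_256_le :
    ∫ t in (2 : ℝ)..256, θ t / (t * log t ^ 2) ≤ 2.2181 * 256 / log 256 ^ 2 := by
  have habel := primeCounting_eq_theta_div_log_add_integral (x := 256) (by norm_num)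
  rw [Nat.floor_ofNat, primeCounting_256, Nat.cast_ofNat] at habel
  have hlower : 5.545 < log (256 : ℝ) := lt_log_of_256_le le_rfl
  have hupper : log (256 : ℝ) ≤ 5.546 := by
    rw [log_256_eq]
    linarith [log_two_lt_d9]
  have htheta : 37.3 ≤ θ 256 / log 256 := by
    rw [le_div_iff₀ (by linarith)]
    linarith [theta_256_ge]
  have hright : 17 ≤ 2.2181 * 256 / log (256 : ℝ) ^ 2 := by
    rw [le_div_iff₀ (by positivity)]
    nlinarith
  linarith

theorem hasDerivAt_mul_div_log_sq (c : ℝ) {t : ℝ} (ht : 1 < t) :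
    HasDerivAt (fun t ↦ c * t / log t ^ 2) (c / log t ^ 2 - 2 * c / log t ^ 3) t := by
  have hlog : log t ≠ 0 := (log_pos ht).ne'
  have ht0 : t ≠ 0 := by linarith
  refine (((hasDerivAt_id' t).const_mul c).fun_div ((hasDerivAt_log ht0).fun_pow 2)
    (pow_ne_zero 2 hlog)).congr_deriv ?_
  field_simp
  ring

-- `log 4 ≤ 1.3863` and `1 - 2 / log t ≥ 5 / 8`, hence the constant `2.2181 ≥ 8 / 5 * 1.3863`.
theorem theta_div_log_sq_le {t : ℝ} (ht : 256 ≤ t) :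
    θ t / (t * log t ^ 2) ≤ 2.2181 / log t ^ 2 - 2 * 2.2181 / log t ^ 3 := by
  have hlog := lt_log_of_256_le ht
  have hlog0 : 0 < log t := by linarith
  have ht0 : 0 < t := by linarith
  have htheta : θ t ≤ 1.3863 * t :=
    (theta_le_log4_mul_x ht0.le).trans (by gcongr; exact log_four_lt.le)
  calc θ t / (t * log t ^ 2) ≤ 1.3863 * t / (t * log t ^ 2) := by gcongr
    _ = 1.3863 * log t / log t ^ 3 := by field_simp
    _ ≤ (2.2181 * log t - 2 * 2.2181) / log t ^ 3 := by gcongr; linarith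
    _ = 2.2181 / log t ^ 2 - 2 * 2.2181 / log t ^ 3 := by field_simp

theorem integral_theta_div_log_sq_256_le {x : ℝ} (hx : 256 ≤ x) :
    ∫ t in (256 : ℝ)..x, θ t / (t * log t ^ 2) ≤
      2.2181 * x / log x ^ 2 - 2.2181 * 256 / log 256 ^ 2 := by
  have hderiv {t : ℝ} (ht : 256 ≤ t) := hasDerivAt_mul_div_log_sq 2.2181 (t := t) (by linarith)
  exact intervalIntegral.integral_le_sub_of_hasDeriv_right_of_le hx
    (fun t ht ↦ (hderiv ht.1).continuousAt.continuousWithinAt)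
    (fun t ht ↦ (hderiv ht.1.le).hasDerivWithinAt)
    ((integrableOn_theta_div_id_mul_log_sq x).mono_set (Set.Icc_subset_Icc_left (by norm_num)))
    (fun t ht ↦ theta_div_log_sq_le ht.1.le)

theorem primeCounting_le {N : ℕ} (hN : 2000 ≤ N) :
    (primeCounting N : ℝ) ≤ (1.1135 * N + 10 * log N) / log N + 2.2181 * N / log N ^ 2 := by
  have hN' : (2000 : ℝ) ≤ N := by exact_mod_cast hN
  have habel := primeCounting_eq_theta_div_log_add_integral (x := N) (by linarith)
  have hint {u v : ℝ} (hu : 2 ≤ u) (huv : u ≤ v) :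
      IntervalIntegrable (fun t ↦ θ t / (t * log t ^ 2)) MeasureTheory.volume u v := by
    rw [intervalIntegrable_iff_integrableOn_Icc_of_le huv]
    exact (integrableOn_theta_div_id_mul_log_sq v).mono_set (Set.Icc_subset_Icc_left hu)
  rw [Nat.floor_natCast, ← intervalIntegral.integral_add_adjacent_intervals
    (hint le_rfl (by norm_num : (2 : ℝ) ≤ 256)) (hint (by norm_num) (by linarith))] at habel
  have hlog : 0 < log (N : ℝ) := log_pos (by linarith)
  have htheta : θ N / log N ≤ (1.1135 * N + 10 * log N) / log N := by gcongr; exact theta_le hN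
  linarith [integral_theta_div_log_sq_two_256_le,
    integral_theta_div_log_sq_256_le (x := N) (by linarith)]

end ChebyshevBounds

section Wheel

/-- The number of `u < U` with `u + s` coprime to `m`. -/
def coprimeCount (m s U : ℕ) : ℕ := Nat.count (fun u ↦ (u + s).Coprime m) U

theorem coprime_iff_of_modEq {x y m : ℕ} (h : x ≡ y [MOD m]) : x.Coprime m ↔ y.Coprime m := by
  rw [Nat.Coprime, Nat.Coprime, h.gcd_eq]

theorem coprimeCount_mod (m s U : ℕ) : coprimeCount m (s % m) U = coprimeCount m s U := by
  have hcongr (u : ℕ) : (u + s % m).Coprime m ↔ (u + s).Coprime m :=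
    coprime_iff_of_modEq ((Nat.mod_modEq s m).add_left u)
  simp only [coprimeCount, hcongr]

theorem coprimeCount_eq_card (m s U : ℕ) :
    coprimeCount m s U = #{x ∈ Ico s (U + s) | x.Coprime m} := by
  rw [coprimeCount, Nat.count_eq_card_filter_range, card_filter, card_filter, range_eq_Ico]
  simpa only [zero_add] using sum_Ico_add' (fun x ↦ if x.Coprime m then 1 else 0) 0 U s

theorem coprimeCount_self (m s : ℕ) : coprimeCount m s m = m.totient := by
  rw [coprimeCount_eq_card, add_comm, ← Nat.filter_coprime_Ico_eq_totient m s]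
  simp only [Nat.coprime_comm]

theorem coprimeCount_add_self (m s U : ℕ) :
    coprimeCount m s (U + m) = coprimeCount m s U + m.totient := by
  have hshift (u : ℕ) : (U + u + s).Coprime m ↔ (u + (U + s)).Coprime m := by
    rw [add_right_comm, add_comm u, add_right_comm]
  rw [coprimeCount, Nat.count_add]
  simp only [hshift]
  rw [← coprimeCount, ← coprimeCount, coprimeCount_self]

set_option maxRecDepth 10000 in
theorem coprimeCount_le_of_lt_self :
    ∀ m ∈ Nat.divisors 30, ∀ s < m, ∀ U < m,
      5 * (m * coprimeCount m s U) ≤ 5 * (m.totient * U) + 8 * m := by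
  decide +kernel

theorem coprimeCount_le {m : ℕ} (hm : m ∈ Nat.divisors 30) (s U : ℕ) :
    5 * (m * coprimeCount m s U) ≤ 5 * (m.totient * U) + 8 * m := by
  have hm0 : 0 < m := Nat.pos_of_mem_divisors hm
  induction U using Nat.strong_induction_on with
  | _ U ih =>
    rcases lt_or_ge U m with hU | hU
    · rw [← coprimeCount_mod]
      exact coprimeCount_le_of_lt_self m hm _ (Nat.mod_lt s hm0) U hU
    · obtain ⟨W, rfl⟩ := Nat.exists_eq_add_of_le' hU
      rw [coprimeCount_add_self]
      linarith [ih W (by omega)]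

theorem exists_mul_modEq {a m : ℕ} (h : a.Coprime m) (r : ℕ) : ∃ s, a * s ≡ r [MOD m] := by
  obtain ⟨k, hk0, hkr⟩ := Nat.chineseRemainder h 0 r
  obtain ⟨s, rfl⟩ := (Nat.modEq_zero_iff_dvd).1 hk0
  exact ⟨s, hkr⟩

theorem card_filter_coprime_mul_add_le {m a : ℕ} (hm : m ∈ Nat.divisors 30) (ha : a.Coprime m)
    (r U : ℕ) :
    (#{u ∈ range U | (a * u + r).Coprime m} : ℝ) ≤ (m.totient : ℝ) / m * U + 1.6 := by
  have hm0 : 0 < m := Nat.pos_of_mem_divisors hm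
  obtain ⟨s, hs⟩ := exists_mul_modEq ha r
  have hshift (u : ℕ) : (a * u + r).Coprime m ↔ (u + s).Coprime m := by
    have hmod : a * u + r ≡ a * (u + s) [MOD m] := by
      rw [mul_add]
      exact hs.symm.add_left _
    rw [coprime_iff_of_modEq hmod, Nat.coprime_mul_iff_left, and_iff_right ha]
  have hcount : #{u ∈ range U | (a * u + r).Coprime m} = coprimeCount m s U := by
    simp only [hshift, coprimeCount, Nat.count_eq_card_filter_range]
  have hbound : (5 * (m * coprimeCount m s U) : ℝ) ≤ 5 * (m.totient * U) + 8 * m := by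
    exact_mod_cast coprimeCount_le hm s U
  rw [hcount, ← sub_le_iff_le_add, div_mul_eq_mul_div, le_div_iff₀ (by positivity)]
  linarith

/-- The sum of `V - v` over the `1 ≤ v < V` coprime to `g`: up to the factor `b / a`, the total
length of the rows `{a u + b v < b V}` with `v` coprime to `g`. -/
def coprimeWeight (g V : ℕ) : ℕ := ∑ v ∈ Ico 1 V with v.Coprime g, (V - v)

theorem coprimeWeight_zero (g : ℕ) : coprimeWeight g 0 = 0 := by simp [coprimeWeight]

theorem coprimeWeight_succ (g V : ℕ) :
    coprimeWeight g (V + 1) = coprimeWeight g V + coprimeCount g 1 V := by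
  calc coprimeWeight g (V + 1) = ∑ v ∈ Ico 1 (V + 1) with v.Coprime g, (V - v + 1) := by
        refine sum_congr rfl fun v hv ↦ ?_
        simp only [mem_filter, mem_Ico] at hv
        omega
    _ = (∑ v ∈ Ico 1 (V + 1) with v.Coprime g, (V - v)) + coprimeCount g 1 V := by
        rw [sum_add_distrib, coprimeCount_eq_card, card_eq_sum_ones]
    _ = coprimeWeight g V + coprimeCount g 1 V := by
        congr 1
        refine (sum_subset (filter_subset_filter _ (Ico_subset_Ico_right V.le_succ))
          fun v hv hv' ↦ ?_).symm
        simp only [mem_filter, mem_Ico] at hv hv'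
        omega

theorem two_mul_coprimeWeight_add_self_le {g : ℕ} (h : 2 * coprimeWeight g g ≤ g.totient * g)
    (V : ℕ) :
    2 * coprimeWeight g (V + g) ≤
      2 * coprimeWeight g V + 2 * (g.totient * V) + g.totient * g := by
  induction V with
  | zero => simpa [coprimeWeight_zero] using h
  | succ k ih =>
    rw [add_right_comm, coprimeWeight_succ, coprimeWeight_succ, coprimeCount_add_self]
    linarith

set_option maxRecDepth 10000 in
theorem coprimeWeight_le_of_le_self :
    ∀ g ∈ Nat.divisors 30, 2 * coprimeWeight g g ≤ g.totient * g ∧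
      ∀ V < g, 4 * (g * coprimeWeight g V) ≤ g.totient * (2 * V ^ 2 + 13) := by
  decide +kernel

theorem coprimeWeight_le {g : ℕ} (hg : g ∈ Nat.divisors 30) (V : ℕ) :
    4 * (g * coprimeWeight g V) ≤ g.totient * (2 * V ^ 2 + 13) := by
  obtain ⟨hself, hlt⟩ := coprimeWeight_le_of_le_self g hg
  have hg0 : 0 < g := Nat.pos_of_mem_divisors hg
  induction V using Nat.strong_induction_on with
  | _ V ih =>
    rcases lt_or_ge V g with hV | hV
    · exact hlt V hV
    · obtain ⟨W, rfl⟩ := Nat.exists_eq_add_of_le' hV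
      have hperiod := Nat.mul_le_mul_left g (two_mul_coprimeWeight_add_self_le hself W)
      linarith [ih W (by omega)]

end Wheel

section RowDecomposition

theorem finite_setOf_prime_not_exists_eq_add {a b : ℕ} (ha : 1 < a) (hb : 1 < b)
    (h : a.Coprime b) : {p : ℕ | p.Prime ∧ ¬ ∃ u v : ℕ, p = a * u + b * v}.Finite := by
  refine (Set.finite_Iic (a * b - a - b)).subset fun p ⟨_, hp⟩ ↦
    (frobeniusNumber_pair h ha hb).2 fun hmem ↦ hp ?_
  obtain ⟨u, v, rfl⟩ := (AddSubmonoid.mem_closure_pair a b _).1 hmem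
  exact ⟨u, v, by simp only [smul_eq_mul, mul_comm]⟩

theorem primeCounting_eq_card (N : ℕ) : primeCounting N = #{p ∈ range (N + 1) | p.Prime} := by
  rw [primeCounting, Nat.primeCounting', Nat.count_eq_card_filter_range]

/-- The set of `u` with `a u + b v` prime and at most `b V`, for `v ≤ V`: the primes of row `v`. -/
def rowPrimes (a b V v : ℕ) : Finset ℕ :=
  {u ∈ range ((V - v) * b / a + 1) | (a * u + b * v).Prime}

theorem eq_or_eq_or_coprime_of_prime_mul_add {a b V u v : ℕ} (ha : 2 ≤ a) (hab : a < b)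
    (hp : (a * u + b * v).Prime) (hV : a * u + b * v ≤ V * b) :
    a * u + b * v = a ∨ a * u + b * v = V * b ∨
      (1 ≤ v ∧ v < V) ∧ v.Coprime a ∧ u ∈ rowPrimes a b V v := by
  rcases Nat.eq_zero_or_pos v with rfl | hv
  · left
    rw [mul_zero, add_zero] at hp ⊢
    rcases Nat.prime_mul_iff.1 hp with ⟨_, rfl⟩ | ⟨_, ha1⟩
    · exact mul_one a
    · omega
  · right
    have hvV : v ≤ V := by
      refine Nat.le_of_mul_le_mul_left ?_ (by omega : 0 < b)
      exact (Nat.le_add_left _ _).trans (hV.trans_eq (mul_comm V b))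
    rcases hvV.lt_or_eq with hlt | rfl
    · refine Or.inr ⟨⟨hv, hlt⟩, ?_, ?_⟩
      · have hdvd : v.gcd a ∣ a * u + b * v :=
          dvd_add ((Nat.gcd_dvd_right v a).mul_right _) ((Nat.gcd_dvd_left v a).mul_left _)
        refine ((Nat.dvd_prime hp).1 hdvd).resolve_right fun hgcd ↦ ?_
        have hle : v.gcd a ≤ a := Nat.gcd_le_right _ (by omega)
        have hge : b ≤ b * v := Nat.le_mul_of_pos_right _ hv
        omega
      · rw [rowPrimes, mem_filter, mem_range, Nat.lt_succ_iff, Nat.le_div_iff_mul_le (by omega),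
          Nat.sub_mul, Nat.le_sub_iff_add_le (Nat.mul_le_mul_right b hvV), mul_comm u, mul_comm v]
        exact ⟨hV, hp⟩
    · exact Or.inl (hV.antisymm ((mul_comm v b).le.trans (Nat.le_add_left _ _)))

theorem primeCounting_le_piStar_add_sum_rowPrimes {a b : ℕ} (V : ℕ) (ha : 2 ≤ a) (hab : a < b)
    (h : a.Coprime b) :
    primeCounting (V * b) ≤
      piStar a b + 2 + ∑ v ∈ Ico 1 V with v.Coprime a, #(rowPrimes a b V v) := by
  have hfin := finite_setOf_prime_not_exists_eq_add (by omega) (by omega) h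
  set rows := {v ∈ Ico 1 V | v.Coprime a}.biUnion fun v ↦
    (rowPrimes a b V v).image fun u ↦ a * u + b * v
  have hsub : {p ∈ range (V * b + 1) | p.Prime} ⊆ (hfin.toFinset ∪ {a, V * b}) ∪ rows := by
    intro p hp
    obtain ⟨hpV, hp⟩ := mem_filter.1 hp
    by_cases hrep : ∃ u v : ℕ, p = a * u + b * v
    · obtain ⟨u, v, rfl⟩ := hrep
      rcases eq_or_eq_or_coprime_of_prime_mul_add ha hab hp (mem_range_succ_iff.1 hpV) with
        heq | heq | ⟨hv, hcop, hu⟩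
      · simp [heq]
      · simp [heq]
      · exact mem_union_right _ (mem_biUnion.2
          ⟨v, mem_filter.2 ⟨mem_Ico.2 hv, hcop⟩, mem_image_of_mem _ hu⟩)
    · exact mem_union_left _ (mem_union_left _ (hfin.mem_toFinset.2 ⟨hp, hrep⟩))
  have hrows : #rows ≤ ∑ v ∈ Ico 1 V with v.Coprime a, #(rowPrimes a b V v) :=
    card_biUnion_le.trans (sum_le_sum fun v _ ↦ card_image_le)
  calc primeCounting (V * b) ≤ #((hfin.toFinset ∪ {a, V * b}) ∪ rows) := by
        rw [primeCounting_eq_card]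
        exact card_le_card hsub
    _ ≤ #hfin.toFinset + #{a, V * b} + #rows :=
        (card_union_le _ _).trans (by gcongr; exact card_union_le _ _)
    _ ≤ _ := by
        rw [piStar, Set.ncard_eq_toFinset_card _ hfin]
        gcongr
        exact card_le_two

theorem card_rowPrimes_le {a b V v : ℕ} {κ δ : ℝ} (hκ : 0 ≤ κ)
    (hrow : ∀ U, (#{u ∈ range U | (a * u + b * v).Prime} : ℝ) ≤ κ * U + δ) :
    (#(rowPrimes a b V v) : ℝ) ≤ κ * (b / a) * ((V - v : ℕ) : ℝ) + (κ + δ) := by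
  have hdiv : (((V - v) * b / a : ℕ) : ℝ) ≤ ((V - v : ℕ) : ℝ) * b / a := by
    simpa only [Nat.cast_mul] using Nat.cast_div_le (α := ℝ) (m := (V - v) * b) (n := a)
  calc (#(rowPrimes a b V v) : ℝ) ≤ κ * ((V - v) * b / a + 1 : ℕ) + δ := hrow _
    _ ≤ κ * (((V - v : ℕ) : ℝ) * b / a + 1) + δ := by
        rw [Nat.cast_add_one]
        gcongr
    _ = κ * (b / a) * ((V - v : ℕ) : ℝ) + (κ + δ) := by ring

theorem primeCounting_le_piStar_add_of_row_le {a b V : ℕ} {κ δ : ℝ} (ha : 2 ≤ a) (hab : a < b)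
    (h : a.Coprime b) (hV : 1 ≤ V) (hκ : 0 ≤ κ) (hδ : 0 ≤ δ)
    (hrow : ∀ v U, 1 ≤ v → v.Coprime a →
      (#{u ∈ range U | (a * u + b * v).Prime} : ℝ) ≤ κ * U + δ) :
    (primeCounting (V * b) : ℝ) ≤
      piStar a b + 2 + κ * (b / a) * coprimeWeight a V + (κ + δ) * (V - 1) := by
  have hcard : (#{v ∈ Ico 1 V | v.Coprime a} : ℝ) ≤ V - 1 := by
    have hle := card_filter_le (Ico 1 V) (fun v ↦ v.Coprime a)
    rw [Nat.card_Ico] at hle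
    rw [le_sub_iff_add_le]
    exact_mod_cast Nat.add_le_of_le_sub hV hle
  calc (primeCounting (V * b) : ℝ) ≤
        piStar a b + 2 + ∑ v ∈ Ico 1 V with v.Coprime a, (#(rowPrimes a b V v) : ℝ) := by
        exact_mod_cast primeCounting_le_piStar_add_sum_rowPrimes V ha hab h
    _ ≤ piStar a b + 2 + ∑ v ∈ Ico 1 V with v.Coprime a,
          (κ * (b / a) * ((V - v : ℕ) : ℝ) + (κ + δ)) := by
        gcongr with v hv
        obtain ⟨hv, hcop⟩ := mem_filter.1 hv
        exact card_rowPrimes_le hκ fun U ↦ hrow v U (mem_Ico.1 hv).1 hcop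
    _ = piStar a b + 2 + κ * (b / a) * coprimeWeight a V +
          (κ + δ) * #{v ∈ Ico 1 V | v.Coprime a} := by
        rw [sum_add_distrib, ← mul_sum, sum_const, nsmul_eq_mul, coprimeWeight, Nat.cast_sum]
        ring
    _ ≤ _ := by gcongr

end RowDecomposition

section TotientQuotient

theorem div_totient_eq_prod {n : ℕ} (hn : n ≠ 0) :
    (n : ℝ) / n.totient = ∏ p ∈ n.primeFactors, (p : ℝ) / (p - 1) := by
  have hφ : (n.totient : ℝ) ≠ 0 :=
    Nat.cast_ne_zero.2 (Nat.totient_pos.2 (Nat.pos_of_ne_zero hn)).ne'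
  have hprod : ∏ p ∈ n.primeFactors, ((p : ℝ) - 1) ≠ 0 := by
    refine prod_ne_zero_iff.2 fun p hp ↦ sub_ne_zero.2 ?_
    exact_mod_cast (Nat.prime_of_mem_primeFactors hp).one_lt.ne'
  have hcast : ∏ p ∈ n.primeFactors, ((p : ℝ) - 1) = (∏ p ∈ n.primeFactors, (p - 1) : ℕ) := by
    rw [Nat.cast_prod]
    exact prod_congr rfl fun p hp ↦ (Nat.cast_pred (Nat.prime_of_mem_primeFactors hp).pos).symm
  rw [prod_div_distrib, div_eq_div_iff hφ hprod, hcast, ← Nat.cast_mul,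
    ← n.totient_mul_prod_primeFactors, mul_comm, Nat.cast_mul, Nat.cast_prod]

theorem sum_inv_le_div_totient {n : ℕ} (hn : n ≠ 0) {t : Finset ℕ}
    (ht : ∀ m ∈ t, m ∈ Nat.factoredNumbers n.primeFactors) :
    ∑ m ∈ t, (m : ℝ)⁻¹ ≤ n / n.totient := by
  have hsum := (EulerProduct.summable_and_hasSum_factoredNumbers_prod_filter_prime_geometric
    (f := (invMonoidHom : ℝ →* ℝ).comp (Nat.castRingHom ℝ : ℕ →* ℝ)) (fun {p} hp ↦ by
      simpa using inv_lt_one_of_one_lt₀ (Nat.one_lt_cast (α := ℝ).2 hp.one_lt)) n.primeFactors).2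
  have hprod : ∏ p ∈ n.primeFactors with p.Prime, (1 - (p : ℝ)⁻¹)⁻¹ = n / n.totient := by
    rw [filter_true_of_mem fun p ↦ Nat.prime_of_mem_primeFactors, div_totient_eq_prod hn]
    refine prod_congr rfl fun p hp ↦ ?_
    have hp0 : (p : ℝ) ≠ 0 := Nat.cast_ne_zero.2 (Nat.prime_of_mem_primeFactors hp).ne_zero
    rw [inv_eq_one_div (p : ℝ), one_sub_div hp0, inv_div]
  rw [← hprod, ← sum_subtype_of_mem (f := fun m : ℕ ↦ (m : ℝ)⁻¹) ht]
  exact sum_le_hasSum _ (fun _ _ ↦ by positivity) hsum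

end TotientQuotient

section SelbergSieve

open scoped ArithmeticFunction.Moebius ArithmeticFunction.zeta

theorem sum_moebius_divisors (n : ℕ) : ∑ d ∈ n.divisors, (μ d : ℝ) = if n = 1 then 1 else 0 := by
  rw [← ArithmeticFunction.one_apply, ← ArithmeticFunction.coe_moebius_mul_coe_zeta,
    ArithmeticFunction.coe_mul_zeta_apply]
  rfl

theorem sum_moebius_divisors_filter_dvd {k : ℕ} (hk : Squarefree k) (l : ℕ) :
    ∑ d ∈ k.divisors with l ∣ d, (μ d : ℝ) = if k = l then (μ l : ℝ) else 0 := by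
  by_cases hlk : l ∣ k
  · obtain ⟨m, rfl⟩ := hlk
    have hl0 : 0 < l := Nat.pos_of_ne_zero (left_ne_zero_of_mul hk.ne_zero)
    have hfilter : {d ∈ (l * m).divisors | l ∣ d} = m.divisors.image (l * ·) := by
      ext d
      simp only [mem_filter, Nat.mem_divisors, mem_image]
      constructor
      · rintro ⟨⟨hd, hne⟩, e, rfl⟩
        exact ⟨e, ⟨Nat.dvd_of_mul_dvd_mul_left hl0 hd, right_ne_zero_of_mul hne⟩, rfl⟩
      · rintro ⟨e, ⟨he, _⟩, rfl⟩
        exact ⟨⟨Nat.mul_dvd_mul_left l he, hk.ne_zero⟩, dvd_mul_right l e⟩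
    have hmul : ∀ e ∈ m.divisors, (μ (l * e) : ℝ) = μ l * μ e := fun e he ↦ by
      rw [ArithmeticFunction.isMultiplicative_moebius.map_mul_of_coprime
        ((Nat.coprime_of_squarefree_mul hk).coprime_dvd_right (Nat.dvd_of_mem_divisors he)),
        Int.cast_mul]
    rw [hfilter, sum_image fun _ _ _ _ ↦ Nat.eq_of_mul_eq_mul_left hl0, sum_congr rfl hmul,
      ← mul_sum, sum_moebius_divisors, mul_ite, mul_one, mul_zero]
    simp only [Nat.mul_eq_left hl0.ne']
  · rw [if_neg fun h ↦ hlk h.symm.dvd, filter_eq_empty_iff.2, sum_empty]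
    exact fun d hd hld ↦ hlk (hld.trans (Nat.dvd_of_mem_divisors hd))

theorem gcd_div_mul_eq_of_squarefree {d e k : ℕ} (hk : Squarefree k) (he : e ∣ d) (hd : d ∣ k) :
    (k / e).gcd d * e = d := by
  obtain ⟨f, rfl⟩ := he
  obtain ⟨m, rfl⟩ := hd
  have hcop : m.gcd e = 1 := (Nat.coprime_of_squarefree_mul hk).symm.coprime_mul_right_right
  have he0 : 0 < e := Nat.pos_of_ne_zero fun h ↦ hk.ne_zero (by rw [h, zero_mul, zero_mul])
  rw [mul_assoc, Nat.mul_div_cancel_left _ he0, mul_comm e f, Nat.gcd_mul_left, hcop, mul_one]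

section DivisorClosed

variable {s : Finset ℕ} (hs : ∀ k ∈ s, Squarefree k) (hdvd : ∀ k ∈ s, ∀ d, d ∣ k → d ∈ s)

include hs hdvd

theorem sum_moebius_mul_sum_filter_dvd (f : ℕ → ℝ) {l : ℕ} (hl : l ∈ s) :
    ∑ d ∈ s with l ∣ d, μ d * ∑ k ∈ s with d ∣ k, f k = μ l * f l := by
  have hdiv : ∀ k ∈ s, {d ∈ s | l ∣ d ∧ d ∣ k} = {d ∈ k.divisors | l ∣ d} := by
    intro k hk
    ext d
    simp only [mem_filter, Nat.mem_divisors]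
    exact ⟨fun h ↦ ⟨⟨h.2.2, (hs k hk).ne_zero⟩, h.2.1⟩, fun h ↦ ⟨hdvd k hk d h.1.1, h.2, h.1.1⟩⟩
  calc ∑ d ∈ s with l ∣ d, μ d * ∑ k ∈ s with d ∣ k, f k
      = ∑ k ∈ s, (∑ d ∈ s with l ∣ d ∧ d ∣ k, (μ d : ℝ)) * f k := by
        simp only [sum_filter, mul_sum, sum_mul, ite_and, mul_ite, ite_mul, mul_zero, zero_mul]
        rw [sum_comm]
        refine sum_congr rfl fun d _ ↦ ?_
        split_ifs
        exacts [rfl, sum_const_zero.symm]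
    _ = ∑ k ∈ s, (if k = l then (μ l : ℝ) else 0) * f k :=
        sum_congr rfl fun k hk ↦ by rw [hdiv k hk, sum_moebius_divisors_filter_dvd (hs k hk)]
    _ = μ l * f l := by simp [hl]

theorem sum_mul_mul_gcd_eq (x : ℕ → ℝ) :
    ∑ d ∈ s, ∑ e ∈ s, x d * x e * (d.gcd e : ℝ) =
      ∑ l ∈ s, (l.totient : ℝ) * (∑ d ∈ s with l ∣ d, x d) ^ 2 := by
  have hgcd : ∀ d ∈ s, ∀ e, (d.gcd e : ℝ) = ∑ l ∈ s with l ∣ d ∧ l ∣ e, (l.totient : ℝ) := by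
    intro d hd e
    rw [← Nat.sum_totient (d.gcd e), Nat.cast_sum]
    refine sum_congr ?_ fun _ _ ↦ rfl
    ext l
    simp only [mem_filter, Nat.mem_divisors, Nat.dvd_gcd_iff]
    exact ⟨fun h ↦ ⟨hdvd d hd l h.1.1, h.1⟩,
      fun h ↦ ⟨h.2, (Nat.gcd_pos_of_pos_left e (hs d hd).ne_zero.bot_lt).ne'⟩⟩
  calc ∑ d ∈ s, ∑ e ∈ s, x d * x e * (d.gcd e : ℝ)
      = ∑ d ∈ s, ∑ e ∈ s, ∑ l ∈ s,
          l.totient * ((if l ∣ d then x d else 0) * (if l ∣ e then x e else 0)) := by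
        refine sum_congr rfl fun d hd ↦ sum_congr rfl fun e _ ↦ ?_
        rw [hgcd d hd e, sum_filter, mul_sum]
        refine sum_congr rfl fun l _ ↦ ?_
        by_cases hld : l ∣ d <;> by_cases hle : l ∣ e <;> simp [hld, hle, mul_comm]
    _ = ∑ l ∈ s, ∑ d ∈ s, ∑ e ∈ s,
          l.totient * ((if l ∣ d then x d else 0) * (if l ∣ e then x e else 0)) :=
        (sum_congr rfl fun d _ ↦ sum_comm).trans sum_comm
    _ = ∑ l ∈ s, (l.totient : ℝ) * (∑ d ∈ s with l ∣ d, x d) ^ 2 := by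
        refine sum_congr rfl fun l _ ↦ ?_
        rw [sq, sum_filter, sum_mul_sum]
        simp only [mul_sum]

theorem mul_sum_inv_totient_filter_dvd_le (d : ℕ) :
    d * ∑ k ∈ s with d ∣ k, (k.totient : ℝ)⁻¹ ≤ ∑ k ∈ s, (k.totient : ℝ)⁻¹ := by
  have hterm : ∀ x ∈ d.divisors ×ˢ {k ∈ s | d ∣ k},
      (x.1.totient : ℝ) * (x.2.totient : ℝ)⁻¹ = ((x.2 / x.1).totient : ℝ)⁻¹ := by
    rintro ⟨e, k⟩ hx
    obtain ⟨he : e ∈ _, hk : k ∈ _⟩ := mem_product.1 hx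
    obtain ⟨hk, hdk⟩ := mem_filter.1 hk
    obtain ⟨m, rfl⟩ := (Nat.dvd_of_mem_divisors he).trans hdk
    have he0 : 0 < e := Nat.pos_of_mem_divisors he
    have hφ : (e.totient : ℝ) ≠ 0 := by exact_mod_cast (Nat.totient_pos.2 he0).ne'
    simp only [Nat.mul_div_cancel_left m he0,
      Nat.totient_mul (Nat.coprime_of_squarefree_mul (hs _ hk)), Nat.cast_mul]
    rw [mul_inv, mul_inv_cancel_left₀ hφ]
  have hinj : Set.InjOn (fun x : ℕ × ℕ ↦ x.2 / x.1)
      ((d.divisors ×ˢ {k ∈ s | d ∣ k} : Finset (ℕ × ℕ)) : Set (ℕ × ℕ)) := by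
    rintro ⟨e, k⟩ hx ⟨e', k'⟩ hx' (heq : k / e = k' / e')
    simp only [coe_product, Set.mem_prod, mem_coe, mem_filter, Nat.mem_divisors] at hx hx'
    obtain ⟨⟨hed, hd0⟩, hk, hdk⟩ := hx
    obtain ⟨⟨hed', _⟩, hk', hdk'⟩ := hx'
    have hgcd := gcd_div_mul_eq_of_squarefree (hs k hk) hed hdk
    have hgcd' := gcd_div_mul_eq_of_squarefree (hs k' hk') hed' hdk'
    rw [heq] at hgcd
    obtain rfl : e = e' := Nat.eq_of_mul_eq_mul_left
      (Nat.gcd_pos_of_pos_right _ (Nat.pos_of_ne_zero hd0)) (hgcd.trans hgcd'.symm)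
    rw [← Nat.div_mul_cancel (hed.trans hdk), heq, Nat.div_mul_cancel (hed.trans hdk')]
  calc d * ∑ k ∈ s with d ∣ k, (k.totient : ℝ)⁻¹
      = ∑ x ∈ d.divisors ×ˢ {k ∈ s | d ∣ k}, ((x.2 / x.1).totient : ℝ)⁻¹ := by
        rw [← sum_congr rfl hterm, sum_product]
        simp only
        rw [← sum_mul_sum, ← Nat.cast_sum, Nat.sum_totient]
    _ = ∑ n ∈ (d.divisors ×ˢ {k ∈ s | d ∣ k}).image fun x ↦ x.2 / x.1, (n.totient : ℝ)⁻¹ :=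
        (sum_image (f := fun n : ℕ ↦ (n.totient : ℝ)⁻¹) hinj).symm
    _ ≤ ∑ k ∈ s, (k.totient : ℝ)⁻¹ := by
        refine sum_le_sum_of_subset_of_nonneg (image_subset_iff.2 ?_) fun _ _ _ ↦ by positivity
        rintro ⟨e, k⟩ hx
        obtain ⟨he, hk⟩ := mem_product.1 hx
        obtain ⟨hk, hdk⟩ := mem_filter.1 hk
        exact hdvd k hk _ (Nat.div_dvd_of_dvd ((Nat.dvd_of_mem_divisors he).trans hdk))

end DivisorClosed

/-- The squarefree integers `1 ≤ d ≤ Q` coprime to `a`: the moduli of Selberg's sieve. -/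
def sieveSupport (a Q : ℕ) : Finset ℕ := {d ∈ Icc 1 Q | Squarefree d ∧ d.Coprime a}

/-- The sum of `1 / φ(d)` over the moduli of the sieve, by which a row is thinned. -/
noncomputable def selbergSum (a Q : ℕ) : ℝ := ∑ d ∈ sieveSupport a Q, (d.totient : ℝ)⁻¹

/-- The quotient `λ_d / d` for Selberg's weights `λ_d`, normalised by `λ_1 = 1`. -/
noncomputable def selbergCoeff (a Q d : ℕ) : ℝ :=
  μ d * ∑ k ∈ sieveSupport a Q with d ∣ k, (k.totient : ℝ)⁻¹ / selbergSum a Q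

theorem mem_sieveSupport {a Q d : ℕ} :
    d ∈ sieveSupport a Q ↔ (1 ≤ d ∧ d ≤ Q) ∧ Squarefree d ∧ d.Coprime a := by
  rw [sieveSupport, mem_filter, mem_Icc]

theorem squarefree_of_mem_sieveSupport {a Q d : ℕ} (hd : d ∈ sieveSupport a Q) : Squarefree d :=
  (mem_sieveSupport.1 hd).2.1

theorem mem_sieveSupport_of_dvd {a Q d : ℕ} (hd : d ∈ sieveSupport a Q) (e : ℕ) (he : e ∣ d) :
    e ∈ sieveSupport a Q := by
  obtain ⟨⟨hd0, hdQ⟩, hsq, hcop⟩ := mem_sieveSupport.1 hd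
  exact mem_sieveSupport.2 ⟨⟨Nat.pos_of_dvd_of_pos he hd0, (Nat.le_of_dvd hd0 he).trans hdQ⟩,
    hsq.squarefree_of_dvd he, hcop.coprime_dvd_left he⟩

theorem one_mem_sieveSupport (a : ℕ) {Q : ℕ} (hQ : 1 ≤ Q) : 1 ∈ sieveSupport a Q :=
  mem_sieveSupport.2 ⟨⟨le_rfl, hQ⟩, squarefree_one, Nat.coprime_one_left a⟩

theorem one_le_selbergSum (a : ℕ) {Q : ℕ} (hQ : 1 ≤ Q) : 1 ≤ selbergSum a Q := by
  simpa [selbergSum] using single_le_sum (f := fun d : ℕ ↦ (d.totient : ℝ)⁻¹)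
    (fun _ _ ↦ by positivity) (one_mem_sieveSupport a hQ)

theorem selbergSum_pos (a : ℕ) {Q : ℕ} (hQ : 1 ≤ Q) : 0 < selbergSum a Q :=
  zero_lt_one.trans_le (one_le_selbergSum a hQ)

theorem selbergCoeff_one (a : ℕ) {Q : ℕ} (hQ : 1 ≤ Q) : selbergCoeff a Q 1 = 1 := by
  simp only [selbergCoeff, ArithmeticFunction.moebius_apply_one, Int.cast_one, one_mul, one_dvd,
    filter_true, ← sum_div]
  exact div_self (selbergSum_pos a hQ).ne'

theorem abs_selbergCoeff_mul_self_le_one {a Q d : ℕ} (hQ : 1 ≤ Q) (hd : d ∈ sieveSupport a Q) :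
    |selbergCoeff a Q d * d| ≤ 1 := by
  have hS := selbergSum_pos a hQ
  have hμ : |(μ d : ℝ)| = 1 := by
    exact_mod_cast ArithmeticFunction.abs_moebius_eq_one_of_squarefree
      (squarefree_of_mem_sieveSupport hd)
  have hle := mul_sum_inv_totient_filter_dvd_le (s := sieveSupport a Q)
    (fun _ ↦ squarefree_of_mem_sieveSupport) (fun _ ↦ mem_sieveSupport_of_dvd) d
  rw [selbergCoeff, ← sum_div, abs_mul, abs_mul, hμ, one_mul, Nat.abs_cast,
    abs_of_nonneg (by positivity), div_mul_eq_mul_div, div_le_one hS, mul_comm]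
  exact hle

theorem sum_selbergCoeff_mul_gcd (a : ℕ) {Q : ℕ} (hQ : 1 ≤ Q) :
    ∑ d ∈ sieveSupport a Q, ∑ e ∈ sieveSupport a Q,
      selbergCoeff a Q d * selbergCoeff a Q e * (d.gcd e : ℝ) = (selbergSum a Q)⁻¹ := by
  have hS := (selbergSum_pos a hQ).ne'
  have hterm : ∀ l ∈ sieveSupport a Q,
      (l.totient : ℝ) * (∑ d ∈ sieveSupport a Q with l ∣ d, selbergCoeff a Q d) ^ 2 =
        (l.totient : ℝ)⁻¹ / selbergSum a Q ^ 2 := by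
    intro l hl
    have hμ : (μ l : ℝ) ^ 2 = 1 := by
      exact_mod_cast ArithmeticFunction.moebius_sq_eq_one_of_squarefree
        (squarefree_of_mem_sieveSupport hl)
    have hφ : (l.totient : ℝ) ≠ 0 :=
      Nat.cast_ne_zero.2 (Nat.totient_pos.2 (mem_sieveSupport.1 hl).1.1).ne'
    simp only [selbergCoeff]
    rw [sum_moebius_mul_sum_filter_dvd (fun _ ↦ squarefree_of_mem_sieveSupport)
      (fun _ ↦ mem_sieveSupport_of_dvd) _ hl, mul_pow, hμ]
    field_simp
  rw [sum_mul_mul_gcd_eq (fun _ ↦ squarefree_of_mem_sieveSupport)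
    (fun _ ↦ mem_sieveSupport_of_dvd), sum_congr rfl hterm, ← sum_div, ← selbergSum]
  field_simp

theorem abs_card_filter_dvd_sub_div_le_one {a k : ℕ} (hk : 0 < k) (h : a.Coprime k) (r U : ℕ) :
    |(#{u ∈ range U | k ∣ a * u + r} : ℝ) - U / k| ≤ 1 := by
  obtain ⟨v, hv⟩ : ∃ v, k ∣ a * v + r := by
    obtain ⟨v, hv⟩ := exists_mul_modEq h (r * (k - 1))
    refine ⟨v, (Nat.modEq_zero_iff_dvd).1 ((hv.add_right r).trans ?_)⟩
    rw [Nat.modEq_zero_iff_dvd, ← Nat.mul_succ, Nat.succ_eq_add_one, Nat.sub_add_cancel hk]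
    exact dvd_mul_left k r
  have hmod (u : ℕ) : k ∣ a * u + r ↔ u ≡ v [MOD k] := by
    rw [← Nat.modEq_zero_iff_dvd]
    have hv0 := Nat.modEq_zero_iff_dvd.2 hv
    exact ⟨fun hu ↦ Nat.ModEq.cancel_left_of_coprime h.symm
      (Nat.ModEq.add_right_cancel' r (hu.trans hv0.symm)),
      fun hu ↦ ((hu.mul_left a).add_right r).trans hv0⟩
  obtain ⟨hlower, hupper⟩ := cast_div_le_and_le_add_one U hk
  simp only [hmod]
  rw [← Nat.count_eq_card_filter_range, Nat.count_modEq_card _ hk, abs_le]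
  split_ifs <;> push_cast <;> constructor <;> linarith

theorem sum_sq_sum_filter_dvd_eq (s t : Finset ℕ) (f : ℕ → ℕ) (w : ℕ → ℝ) :
    ∑ u ∈ t, (∑ d ∈ s with d ∣ f u, w d) ^ 2 =
      ∑ d ∈ s, ∑ e ∈ s, w d * w e * #{u ∈ t | d.lcm e ∣ f u} := by
  calc ∑ u ∈ t, (∑ d ∈ s with d ∣ f u, w d) ^ 2
      = ∑ u ∈ t, ∑ d ∈ s, ∑ e ∈ s, if d.lcm e ∣ f u then w d * w e else 0 := by
        refine sum_congr rfl fun u _ ↦ ?_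
        rw [sq, sum_filter, sum_mul_sum]
        refine sum_congr rfl fun d _ ↦ sum_congr rfl fun e _ ↦ ?_
        simp only [Nat.lcm_dvd_iff, ite_and, mul_ite, ite_mul, mul_zero, zero_mul]
        split_ifs <;> rfl
    _ = ∑ d ∈ s, ∑ e ∈ s, ∑ u ∈ t, if d.lcm e ∣ f u then w d * w e else 0 :=
        sum_comm.trans (sum_congr rfl fun d _ ↦ sum_comm)
    _ = _ := by
        simp only [← sum_filter, sum_const, nsmul_eq_mul, mul_comm]

theorem sum_selbergCoeff_mul_self_of_prime {a Q p : ℕ} (hQ : 1 ≤ Q) (hp : p.Prime) (hQp : Q < p) :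
    ∑ d ∈ sieveSupport a Q with d ∣ p, selbergCoeff a Q d * d = 1 := by
  have hdvd : {d ∈ sieveSupport a Q | d ∣ p} = {1} := by
    ext d
    rw [mem_filter, mem_singleton, Nat.dvd_prime hp]
    constructor
    · rintro ⟨hd, rfl | rfl⟩
      · rfl
      · exact absurd (mem_sieveSupport.1 hd).1.2 hQp.not_ge
    · rintro rfl
      exact ⟨one_mem_sieveSupport a hQ, Or.inl rfl⟩
  rw [hdvd, sum_singleton, selbergCoeff_one a hQ, Nat.cast_one, one_mul]

theorem selbergCoeff_mul_card_le {a Q d e : ℕ} (hd : d ∈ sieveSupport a Q)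
    (he : e ∈ sieveSupport a Q) (r U : ℕ) :
    selbergCoeff a Q d * d * (selbergCoeff a Q e * e) * #{u ∈ range U | d.lcm e ∣ a * u + r} ≤
      U * (selbergCoeff a Q d * selbergCoeff a Q e * (d.gcd e : ℝ)) + 1 := by
  obtain ⟨⟨hd0, hdQ⟩, -, hda⟩ := mem_sieveSupport.1 hd
  obtain ⟨⟨he0, -⟩, -, hea⟩ := mem_sieveSupport.1 he
  have hlcm : 0 < d.lcm e := Nat.lcm_pos hd0 he0
  have hcop : a.Coprime (d.lcm e) :=
    (hda.mul_left hea).symm.coprime_dvd_right (Nat.lcm_dvd_mul d e)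
  have hmain : selbergCoeff a Q d * d * (selbergCoeff a Q e * e) * ((U : ℝ) / d.lcm e) =
      U * (selbergCoeff a Q d * selbergCoeff a Q e * (d.gcd e : ℝ)) := by
    have hgcd : (d.gcd e : ℝ) * d.lcm e = d * e := by exact_mod_cast Nat.gcd_mul_lcm d e
    rw [mul_div_assoc', div_eq_iff (Nat.cast_ne_zero.2 hlcm.ne')]
    linear_combination -(selbergCoeff a Q d * selbergCoeff a Q e * U) * hgcd
  have herror : selbergCoeff a Q d * d * (selbergCoeff a Q e * e) *
      (#{u ∈ range U | d.lcm e ∣ a * u + r} - (U : ℝ) / d.lcm e) ≤ 1 := by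
    refine (le_abs_self _).trans ?_
    rw [abs_mul, abs_mul]
    exact mul_le_one₀
      (mul_le_one₀ (abs_selbergCoeff_mul_self_le_one (hd0.trans hdQ) hd) (abs_nonneg _)
        (abs_selbergCoeff_mul_self_le_one (hd0.trans hdQ) he))
      (abs_nonneg _) (abs_card_filter_dvd_sub_div_le_one hlcm hcop r U)
  linarith

theorem card_filter_prime_mul_add_le (a r U : ℕ) {Q : ℕ} (hQ : 1 ≤ Q) :
    (#{u ∈ range U | (a * u + r).Prime ∧ Q < a * u + r} : ℝ) ≤
      U / selbergSum a Q + (Q : ℝ) ^ 2 := by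
  have hcard : (#(sieveSupport a Q) : ℝ) ≤ Q := by
    exact_mod_cast (card_filter_le _ _).trans (Nat.card_Icc 1 Q).le
  calc (#{u ∈ range U | (a * u + r).Prime ∧ Q < a * u + r} : ℝ)
      ≤ ∑ u ∈ range U, (∑ d ∈ sieveSupport a Q with d ∣ a * u + r, selbergCoeff a Q d * d) ^ 2 := by
        rw [← sum_boole]
        gcongr with u
        split_ifs with hu
        · rw [sum_selbergCoeff_mul_self_of_prime hQ hu.1 hu.2, one_pow]
        · exact sq_nonneg _
    _ = ∑ d ∈ sieveSupport a Q, ∑ e ∈ sieveSupport a Q,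
          selbergCoeff a Q d * d * (selbergCoeff a Q e * e) *
            #{u ∈ range U | d.lcm e ∣ a * u + r} :=
        sum_sq_sum_filter_dvd_eq _ _ _ _
    _ ≤ ∑ d ∈ sieveSupport a Q, ∑ e ∈ sieveSupport a Q,
          (U * (selbergCoeff a Q d * selbergCoeff a Q e * (d.gcd e : ℝ)) + 1) := by
        gcongr with d hd e he
        exact selbergCoeff_mul_card_le hd he r U
    _ = U / selbergSum a Q + (#(sieveSupport a Q) : ℝ) ^ 2 := by
        simp only [sum_add_distrib, ← mul_sum, sum_const, nsmul_eq_mul, mul_one,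
          sum_selbergCoeff_mul_gcd a hQ]
        ring
    _ ≤ _ := by gcongr

/-- The product of the primes that divide `n` but not `a`: the modulus of `sieveSupport a Q` to
which the term `1 / n` of the harmonic sum is charged. -/
def coprimeRadical (a n : ℕ) : ℕ := ∏ p ∈ n.primeFactors with ¬ p ∣ a, p

theorem coprimeRadical_dvd (a n : ℕ) : coprimeRadical a n ∣ n :=
  (prod_dvd_prod_of_subset _ _ _ (filter_subset _ _)).trans n.prod_primeFactors_dvd

theorem primeFactors_coprimeRadical (a n : ℕ) :
    (coprimeRadical a n).primeFactors = {p ∈ n.primeFactors | ¬ p ∣ a} :=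
  Nat.primeFactors_prod fun _ hp ↦ Nat.prime_of_mem_primeFactors (mem_filter.1 hp).1

theorem coprimeRadical_mem_sieveSupport {a Q n : ℕ} (hn : 1 ≤ n) (hnQ : n ≤ Q) :
    coprimeRadical a n ∈ sieveSupport a Q := by
  have hprime : ∀ p ∈ ({p ∈ n.primeFactors | ¬ p ∣ a} : Finset ℕ), p.Prime := fun p hp ↦
    Nat.prime_of_mem_primeFactors (mem_filter.1 hp).1
  refine mem_sieveSupport.2 ⟨⟨Nat.pos_of_dvd_of_pos (coprimeRadical_dvd a n) hn,
    (Nat.le_of_dvd hn (coprimeRadical_dvd a n)).trans hnQ⟩, ?_, ?_⟩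
  · refine squarefree_prod_of_pairwise_isCoprime (fun p hp q hq hpq ↦ ?_)
      fun p hp ↦ (hprime p hp).squarefree
    exact Nat.coprime_iff_isRelPrime.1
      ((Nat.coprime_primes (hprime p hp) (hprime q hq)).2 hpq)
  · exact Nat.Coprime.prod_left fun p hp ↦
      (hprime p hp).coprime_iff_not_dvd.2 (mem_filter.1 hp).2

theorem sum_inv_fiber_coprimeRadical_le {a Q k : ℕ} (ha : a ≠ 0) (hk : k ∈ sieveSupport a Q) :
    ∑ n ∈ Icc 1 Q with coprimeRadical a n = k, (n : ℝ)⁻¹ ≤ a / a.totient * (k.totient : ℝ)⁻¹ := by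
  obtain ⟨⟨hk0, -⟩, -, hka⟩ := mem_sieveSupport.1 hk
  set fiber := {n ∈ Icc 1 Q | coprimeRadical a n = k}
  have hfiber : ∀ n ∈ fiber, (n ≠ 0 ∧ k ∣ n) ∧ coprimeRadical a n = k := by
    intro n hn
    obtain ⟨hIcc, hrad⟩ := mem_filter.1 hn
    exact ⟨⟨Nat.one_le_iff_ne_zero.1 (mem_Icc.1 hIcc).1, hrad ▸ coprimeRadical_dvd a n⟩, hrad⟩
  have hinj : Set.InjOn (· / k) (fiber : Set ℕ) := fun n hn n' hn' (h : n / k = n' / k) ↦ by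
    rw [← Nat.div_mul_cancel (hfiber n hn).1.2, h, Nat.div_mul_cancel (hfiber n' hn').1.2]
  have hfactored : ∀ m ∈ fiber.image (· / k), m ∈ Nat.factoredNumbers (k * a).primeFactors := by
    refine forall_mem_image.2 fun n hn ↦ ?_
    obtain ⟨⟨hn0, hkn⟩, hrad⟩ := hfiber n hn
    refine Nat.mem_factoredNumbers_of_primeFactors_subset
      (Nat.div_pos (Nat.le_of_dvd hn0.bot_lt hkn) hk0).ne' fun p hp ↦ ?_
    have hpn := Nat.primeFactors_mono (Nat.div_dvd_of_dvd hkn) hn0 hp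
    rw [Nat.primeFactors_mul (Nat.ne_zero_of_lt hk0) ha, mem_union, ← hrad,
      primeFactors_coprimeRadical, mem_filter, Nat.mem_primeFactors (n := a)]
    have hprime := Nat.prime_of_mem_primeFactors hp
    tauto
  calc ∑ n ∈ fiber, (n : ℝ)⁻¹ = (k : ℝ)⁻¹ * ∑ m ∈ fiber.image (· / k), (m : ℝ)⁻¹ := by
        rw [sum_image (f := fun m : ℕ ↦ (m : ℝ)⁻¹) hinj, mul_sum]
        refine sum_congr rfl fun n hn ↦ ?_
        rw [← mul_inv, ← Nat.cast_mul, Nat.mul_div_cancel' (hfiber n hn).1.2]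
    _ ≤ (k : ℝ)⁻¹ * ((k * a : ℕ) / (k * a).totient) := by
        gcongr
        exact sum_inv_le_div_totient (mul_ne_zero (Nat.ne_zero_of_lt hk0) ha) hfactored
    _ = a / a.totient * (k.totient : ℝ)⁻¹ := by
        rw [Nat.totient_mul hka]
        push_cast
        field_simp

theorem log_add_one_le_mul_selbergSum {a : ℕ} (ha : a ≠ 0) (Q : ℕ) :
    log (Q + 1) ≤ a / a.totient * selbergSum a Q := by
  calc log (Q + 1) ≤ ∑ n ∈ Icc 1 Q, (n : ℝ)⁻¹ := by
        simpa [harmonic_eq_sum_Icc] using log_add_one_le_harmonic Q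
    _ = ∑ k ∈ sieveSupport a Q, ∑ n ∈ Icc 1 Q with coprimeRadical a n = k, (n : ℝ)⁻¹ :=
        (sum_fiberwise_of_maps_to (fun n hn ↦ coprimeRadical_mem_sieveSupport
          (mem_Icc.1 hn).1 (mem_Icc.1 hn).2) _).symm
    _ ≤ ∑ k ∈ sieveSupport a Q, a / a.totient * (k.totient : ℝ)⁻¹ := by
        gcongr with k hk
        exact sum_inv_fiber_coprimeRadical_le ha hk
    _ = a / a.totient * selbergSum a Q := by rw [← mul_sum, selbergSum]

end SelbergSieve

section CoprimeWeight

/-- Products of `p / (p - 1)` over sets of primes `p ≥ q` with product below `B` are at most `c`. -/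
def IsPrimeProductBound (q : ℕ) (B c : ℝ) : Prop :=
  ∀ s : Finset ℕ, (∀ p ∈ s, p.Prime ∧ q ≤ p) → ∏ p ∈ s, (p : ℝ) < B →
    ∏ p ∈ s, (p : ℝ) / (p - 1) ≤ c

theorem isPrimeProductBound_self (q : ℕ) : IsPrimeProductBound q q 1 := by
  intro s hs hB
  rcases s.eq_empty_or_nonempty with rfl | ⟨p, hp⟩
  · rw [prod_empty]
  · have hle : p ≤ ∏ p ∈ s, p :=
      Nat.le_of_dvd (prod_pos fun r hr ↦ (hs r hr).1.pos) (dvd_prod_of_mem _ hp)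
    rw [← Nat.cast_prod, Nat.cast_lt] at hB
    exact absurd (hs p hp).2 (hle.trans_lt hB).not_ge

theorem div_sub_one_nonneg_of_prime {p : ℕ} (hp : p.Prime) : 0 ≤ (p : ℝ) / (p - 1) :=
  div_nonneg p.cast_nonneg (sub_nonneg.2 (Nat.one_le_cast.2 hp.one_le))

theorem IsPrimeProductBound.prev {q q' : ℕ} {B c : ℝ} (hq : 2 ≤ q) (hc : 1 ≤ c)
    (hgap : ∀ p ∈ Ioo q q', ¬ p.Prime) (h : IsPrimeProductBound q' B c) :
    IsPrimeProductBound q (q * B) (q / (q - 1) * c) := by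
  intro s hs hB
  have hq2 : (2 : ℝ) ≤ q := by exact_mod_cast hq
  rcases s.eq_empty_or_nonempty with rfl | hne
  · rw [prod_empty]
    exact one_le_mul_of_one_le_of_one_le ((one_le_div (by linarith)).2 (by linarith)) hc
  · set p := s.min' hne with hp
    have hps : p ∈ s := s.min'_mem hne
    have hpq : (q : ℝ) ≤ p := by exact_mod_cast (hs p hps).2
    have hrest : ∀ r ∈ s.erase p, r.Prime ∧ q' ≤ r := fun r hr ↦ by
      have hr' := hs r (mem_of_mem_erase hr)
      refine ⟨hr'.1, not_lt.1 fun hlt ↦ hgap r (mem_Ioo.2 ⟨?_, hlt⟩) hr'.1⟩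
      exact (hs p hps).2.trans_lt (s.min'_lt_of_mem_erase_min' hne hr)
    rw [← mul_prod_erase s _ hps] at hB ⊢
    have hB' : ∏ r ∈ s.erase p, (r : ℝ) < B := by
      refine lt_of_mul_lt_mul_left (lt_of_le_of_lt ?_ hB) (by linarith)
      gcongr
    have hfactor : (p : ℝ) / (p - 1) ≤ q / (q - 1) := by
      rw [div_le_div_iff₀ (by linarith) (by linarith)]
      linarith
    exact mul_le_mul hfactor (h _ hrest hB')
      (prod_nonneg fun r hr ↦ div_sub_one_nonneg_of_prime (hrest r hr).1)
      (div_nonneg (by linarith) (by linarith))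

-- `323323 = 7 * 11 * 13 * 17 * 19`
theorem isPrimeProductBound_seven : IsPrimeProductBound 7 323323 1.4772 := by
  have h17 := (isPrimeProductBound_self 19).prev (q := 17) (by norm_num) le_rfl (by decide +kernel)
  have h13 := h17.prev (q := 13) (by norm_num) (by norm_num) (by decide +kernel)
  have h11 := h13.prev (q := 11) (by norm_num) (by norm_num) (by decide +kernel)
  have h7 := h11.prev (q := 7) (by norm_num) (by norm_num) (by decide +kernel)
  exact fun s hs hB ↦ (h7 s hs (by norm_num at hB ⊢; exact hB)).trans (by norm_num)

theorem gcd_thirty_mem_divisors (a : ℕ) : a.gcd 30 ∈ Nat.divisors 30 :=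
  Nat.mem_divisors.2 ⟨Nat.gcd_dvd_right a 30, by norm_num⟩

theorem div_totient_le_mul_gcd_thirty {a : ℕ} (ha : a ≠ 0) (ha' : a < 323323) :
    (a : ℝ) / a.totient ≤ 1.4772 * ((a.gcd 30 : ℕ) / (a.gcd 30).totient) := by
  rw [div_totient_eq_prod ha, div_totient_eq_prod (Nat.gcd_ne_zero_left ha),
    Nat.primeFactors_gcd ha (by norm_num),
    ← prod_filter_mul_prod_filter_not a.primeFactors (· ∈ Nat.primeFactors 30),
    filter_mem_eq_inter, mul_comm]
  refine mul_le_mul_of_nonneg_right (isPrimeProductBound_seven _ (fun p hp ↦ ?_) ?_)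
    (prod_nonneg fun p hp ↦
      div_sub_one_nonneg_of_prime (Nat.prime_of_mem_primeFactors (mem_inter.1 hp).1))
  · obtain ⟨hpa, hp30⟩ := mem_filter.1 hp
    have hprime := Nat.prime_of_mem_primeFactors hpa
    refine ⟨hprime, not_lt.1 fun hlt ↦ hp30 (Nat.mem_primeFactors.2 ⟨hprime, ?_, by norm_num⟩)⟩
    have hsmall : ∀ p < 7, p.Prime → p ∣ 30 := by decide +kernel
    exact hsmall p hlt hprime
  · have hdvd := (prod_dvd_prod_of_subset _ _ id (filter_subset (· ∉ Nat.primeFactors 30) _)).trans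
      a.prod_primeFactors_dvd
    have hlt := (Nat.le_of_dvd (Nat.pos_of_ne_zero ha) hdvd).trans_lt ha'
    rw [← Nat.cast_prod]
    exact mod_cast hlt

theorem coprimeWeight_le_of_dvd {g a : ℕ} (h : g ∣ a) (V : ℕ) :
    coprimeWeight a V ≤ coprimeWeight g V :=
  sum_le_sum_of_subset (monotone_filter_right _ fun _ _ hv ↦ hv.coprime_dvd_right h)

theorem div_totient_mul_coprimeWeight_le {g : ℕ} (hg : g ∈ Nat.divisors 30) (V : ℕ) :
    (g : ℝ) / g.totient * coprimeWeight g V ≤ (V : ℝ) ^ 2 / 2 + 3.25 := by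
  have hbound : (4 : ℝ) * (g * coprimeWeight g V) ≤ g.totient * (2 * (V : ℝ) ^ 2 + 13) := by
    exact_mod_cast coprimeWeight_le hg V
  have hφ : (0 : ℝ) < g.totient :=
    Nat.cast_pos.2 (Nat.totient_pos.2 (Nat.pos_of_mem_divisors hg))
  rw [div_mul_eq_mul_div, div_le_iff₀ hφ]
  linarith

theorem div_totient_mul_coprimeWeight_le_of_lt {a : ℕ} (ha : a ≠ 0) (ha' : a < 323323) (V : ℕ) :
    (a : ℝ) / a.totient * coprimeWeight a V ≤ 1.4772 * ((V : ℝ) ^ 2 / 2 + 3.25) := by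
  calc (a : ℝ) / a.totient * coprimeWeight a V
      ≤ 1.4772 * ((a.gcd 30 : ℕ) / (a.gcd 30).totient) * coprimeWeight (a.gcd 30) V := by
        gcongr
        · exact div_totient_le_mul_gcd_thirty ha ha'
        · exact coprimeWeight_le_of_dvd (Nat.gcd_dvd_left a 30) V
    _ ≤ 1.4772 * ((V : ℝ) ^ 2 / 2 + 3.25) := by
        rw [mul_assoc]
        gcongr
        exact div_totient_mul_coprimeWeight_le (gcd_thirty_mem_divisors a) V

theorem coprimeCount_mul_add {p m : ℕ} (hp : p.Prime) (hpm : p.Coprime m) (T : ℕ) :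
    coprimeCount (p * m) 1 T + coprimeCount m 1 (T / p) = coprimeCount m 1 T := by
  simp only [coprimeCount_eq_card]
  rw [← card_filter_add_card_filter_not (s := {n ∈ Ico 1 (T + 1) | n.Coprime m}) (Nat.Coprime · p),
    filter_filter, filter_filter]
  congr 1
  · simp only [Nat.coprime_mul_iff_right, and_comm]
  · rw [← card_image_of_injective _ (mul_right_injective₀ hp.ne_zero)]
    congr 1
    ext n
    simp only [mem_image, mem_filter, mem_Ico, Nat.coprime_comm (m := p), hp.coprime_iff_not_dvd,
      not_not]
    constructor
    · rintro ⟨k, ⟨⟨hk, hkT⟩, hcop⟩, rfl⟩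
      refine ⟨⟨Nat.mul_pos hp.pos hk, ?_⟩, hpm.mul_left hcop, dvd_mul_right p k⟩
      have := (Nat.le_div_iff_mul_le hp.pos).1 (Nat.lt_succ_iff.1 hkT)
      linarith
    · rintro ⟨⟨hn, hnT⟩, hcop, k, rfl⟩
      refine ⟨k, ⟨⟨Nat.pos_of_mul_pos_left hn, ?_⟩, hcop.coprime_mul_left⟩, rfl⟩
      rw [Nat.lt_succ_iff, Nat.le_div_iff_mul_le hp.pos]
      linarith

-- The real variable `t` makes the induction go through: `⌊t⌋ / p = ⌊t / p⌋`.
theorem abs_coprimeCount_prod_sub_le {s : Finset ℕ} (hs : ∀ p ∈ s, p.Prime) {t : ℝ} (ht : 0 ≤ t) :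
    |(coprimeCount (∏ p ∈ s, p) 1 ⌊t⌋₊ : ℝ) - t / ∏ p ∈ s, (p : ℝ) / (p - 1)| ≤ 2 ^ #s := by
  induction s using Finset.induction_on generalizing t with
  | empty =>
    have hcount : coprimeCount 1 1 ⌊t⌋₊ = ⌊t⌋₊ := by simp [coprimeCount_eq_card]
    rw [prod_empty, prod_empty, hcount, div_one, card_empty, pow_zero, abs_le]
    constructor <;> linarith [Nat.floor_le ht, Nat.lt_floor_add_one t]
  | insert p s hps ih =>
    have hs' : ∀ q ∈ s, q.Prime := fun q hq ↦ hs q (mem_insert_of_mem hq)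
    have hp : p.Prime := hs p (mem_insert_self p s)
    have hp0 : (p : ℝ) ≠ 0 := Nat.cast_ne_zero.2 hp.ne_zero
    have hcop : p.Coprime (∏ q ∈ s, q) := Nat.Coprime.prod_right fun q hq ↦
      (Nat.coprime_primes hp (hs' q hq)).2 fun h ↦ hps (h ▸ hq)
    have hcount : (coprimeCount (p * ∏ q ∈ s, q) 1 ⌊t⌋₊ : ℝ) =
        coprimeCount (∏ q ∈ s, q) 1 ⌊t⌋₊ - coprimeCount (∏ q ∈ s, q) 1 ⌊t / p⌋₊ := by
      rw [Nat.floor_div_natCast, ← coprimeCount_mul_add hp hcop]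
      push_cast
      ring
    have hmain : t / ((p : ℝ) / (p - 1) * ∏ q ∈ s, (q : ℝ) / (q - 1)) =
        t / ∏ q ∈ s, (q : ℝ) / (q - 1) - t / p / ∏ q ∈ s, (q : ℝ) / (q - 1) := by
      rw [← div_div, div_div_eq_mul_div, ← sub_div]
      congr 1
      field_simp
    rw [prod_insert hps, prod_insert hps, card_insert_of_notMem hps, hcount, hmain,
      sub_sub_sub_comm, pow_succ, mul_two]
    exact (abs_sub _ _).trans (add_le_add (ih hs' ht) (ih hs' (by positivity)))

theorem coprimeCount_prod_primeFactors {a : ℕ} (ha : a ≠ 0) (s U : ℕ) :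
    coprimeCount (∏ p ∈ a.primeFactors, p) s U = coprimeCount a s U := by
  have hiff (u : ℕ) : (u + s).Coprime (∏ p ∈ a.primeFactors, p) ↔ (u + s).Coprime a := by
    refine ⟨fun h ↦ Nat.coprime_of_dvd fun p hp hpu hpa ↦ ?_,
      fun h ↦ h.coprime_dvd_right a.prod_primeFactors_dvd⟩
    exact Nat.not_coprime_of_dvd_of_dvd hp.one_lt hpu
      (dvd_prod_of_mem id (Nat.mem_primeFactors.2 ⟨hp, hpa, ha⟩)) h
  simp only [coprimeCount, hiff]

theorem coprimeCount_le_add_two_pow {a : ℕ} (ha : a ≠ 0) (T : ℕ) :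
    (coprimeCount a 1 T : ℝ) ≤ (a.totient : ℝ) / a * T + 2 ^ #a.primeFactors := by
  have h := abs_coprimeCount_prod_sub_le (s := a.primeFactors)
    (fun p ↦ Nat.prime_of_mem_primeFactors) T.cast_nonneg
  rw [Nat.floor_natCast, coprimeCount_prod_primeFactors ha, ← div_totient_eq_prod ha,
    div_div_eq_mul_div, mul_comm (T : ℝ), mul_div_right_comm] at h
  linarith [le_abs_self ((coprimeCount a 1 T : ℝ) - (a.totient : ℝ) / a * T)]

theorem coprimeWeight_le_add_two_pow_mul {a : ℕ} (ha : a ≠ 0) (V : ℕ) :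
    (coprimeWeight a V : ℝ) ≤
      (a.totient : ℝ) / a * ((V : ℝ) ^ 2 / 2) + 2 ^ #a.primeFactors * V := by
  induction V with
  | zero => simp [coprimeWeight_zero]
  | succ k ih =>
    have hφ : (0 : ℝ) ≤ (a.totient : ℝ) / a := by positivity
    rw [coprimeWeight_succ]
    push_cast
    linarith [coprimeCount_le_add_two_pow ha k]

theorem sq_div_sub_one_mul_two_le {p : ℕ} (hp : p.Prime) :
    ((p : ℝ) / (p - 1) * 2) ^ 2 ≤
      p * ((if p = 2 then 8 else 1) * (if p = 3 then 3 else 1) * (if p = 5 then 1.25 else 1)) := by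
  rcases lt_or_ge p 7 with h7 | h7
  · have hcases : ∀ p < 7, p.Prime → p = 2 ∨ p = 3 ∨ p = 5 := by decide +kernel
    rcases hcases p h7 hp with rfl | rfl | rfl <;> norm_num
  · have h7' : (7 : ℝ) ≤ p := by exact_mod_cast h7
    rw [if_neg (by omega), if_neg (by omega), if_neg (by omega), div_mul_eq_mul_div, div_pow,
      div_le_iff₀ (by nlinarith)]
    nlinarith

theorem sq_div_totient_mul_two_pow_le {a : ℕ} (ha : a ≠ 0) :
    ((a : ℝ) / a.totient * 2 ^ #a.primeFactors) ^ 2 ≤ 30 * a := by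
  have hrad : ∏ p ∈ a.primeFactors, (p : ℝ) ≤ a := by
    rw [← Nat.cast_prod]
    exact_mod_cast Nat.le_of_dvd (Nat.pos_of_ne_zero ha) a.prod_primeFactors_dvd
  have hrad0 : (0 : ℝ) ≤ ∏ p ∈ a.primeFactors, (p : ℝ) := by positivity
  rw [div_totient_eq_prod ha, ← prod_const, ← prod_mul_distrib, ← prod_pow]
  refine (prod_le_prod (fun _ _ ↦ by positivity) fun p hp ↦
    sq_div_sub_one_mul_two_le (Nat.prime_of_mem_primeFactors hp)).trans ?_
  simp only [prod_mul_distrib, prod_ite_eq']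
  split_ifs <;> linarith

theorem div_totient_mul_coprimeWeight_le_add_sqrt {a : ℕ} (ha : a ≠ 0) (V : ℕ) :
    (a : ℝ) / a.totient * coprimeWeight a V ≤ (V : ℝ) ^ 2 / 2 + 5.48 * √a * V := by
  have hφ : (a.totient : ℝ) ≠ 0 :=
    Nat.cast_ne_zero.2 (Nat.totient_pos.2 (Nat.pos_of_ne_zero ha)).ne'
  have ha0 : (a : ℝ) ≠ 0 := Nat.cast_ne_zero.2 ha
  have hsqrt : (a : ℝ) / a.totient * 2 ^ #a.primeFactors ≤ 5.48 * √a := by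
    refine le_of_sq_le_sq ((sq_div_totient_mul_two_pow_le ha).trans ?_) (by positivity)
    rw [mul_pow, sq_sqrt a.cast_nonneg]
    gcongr
    norm_num
  calc (a : ℝ) / a.totient * coprimeWeight a V
      ≤ (a : ℝ) / a.totient *
          ((a.totient : ℝ) / a * ((V : ℝ) ^ 2 / 2) + 2 ^ #a.primeFactors * V) := by
        gcongr
        exact coprimeWeight_le_add_two_pow_mul ha V
    _ = (V : ℝ) ^ 2 / 2 + (a : ℝ) / a.totient * 2 ^ #a.primeFactors * V := by field_simp
    _ ≤ _ := by gcongr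

end CoprimeWeight

section WheelAndSelbergBounds

/-- The largest divisor of `30` coprime to `a`, which is the part of the modulus `30` that excludes
values of `u ↦ a u + r` from being prime. -/
def wheelModulus (a : ℕ) : ℕ := 30 / a.gcd 30

/-- The proportion of residues kept by the wheel modulo `30`, times the total length of the rows
`1, …, V - 1` coprime to `a`, in units of `b / a`. -/
noncomputable def wheelWeight (a V : ℕ) : ℝ :=
  ((wheelModulus a).totient : ℝ) / wheelModulus a * coprimeWeight a V

theorem wheelModulus_mem_divisors (a : ℕ) : wheelModulus a ∈ Nat.divisors 30 :=
  Nat.mem_divisors.2 ⟨Nat.div_dvd_of_dvd (Nat.gcd_dvd_right a 30), by norm_num⟩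

theorem wheelModulus_mul_gcd (a : ℕ) : wheelModulus a * a.gcd 30 = 30 :=
  Nat.div_mul_cancel (Nat.gcd_dvd_right a 30)

theorem coprime_wheelModulus_gcd (a : ℕ) : (wheelModulus a).Coprime (a.gcd 30) := by
  have hsq : Squarefree 30 := by decide +kernel
  exact Nat.coprime_of_squarefree_mul ((wheelModulus_mul_gcd a).symm ▸ hsq)

theorem coprime_wheelModulus (a : ℕ) : a.Coprime (wheelModulus a) := by
  refine Nat.eq_one_of_dvd_coprimes (coprime_wheelModulus_gcd a) (Nat.gcd_dvd_right _ _) ?_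
  exact Nat.gcd_dvd_gcd_of_dvd_right a (Nat.dvd_of_mem_divisors (wheelModulus_mem_divisors a))

theorem totient_wheelModulus_div (a : ℕ) :
    ((wheelModulus a).totient : ℝ) / wheelModulus a =
      8 / 30 * ((a.gcd 30 : ℕ) / (a.gcd 30).totient) := by
  have hφ : ((wheelModulus a).totient : ℝ) * (a.gcd 30).totient = 8 := by
    rw [← Nat.cast_mul, ← Nat.totient_mul (coprime_wheelModulus_gcd a), wheelModulus_mul_gcd]
    exact_mod_cast (by decide +kernel : Nat.totient 30 = 8)
  have hm : (wheelModulus a : ℝ) * (a.gcd 30 : ℕ) = 30 := by exact_mod_cast wheelModulus_mul_gcd a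
  have hm0 := left_ne_zero_of_mul (hm.trans_ne (by norm_num))
  have hφ0 := right_ne_zero_of_mul (hφ.trans_ne (by norm_num))
  field_simp
  linear_combination 30 * hφ - 8 * hm

theorem wheelWeight_le (a V : ℕ) : wheelWeight a V ≤ 8 / 30 * ((V : ℝ) ^ 2 / 2 + 3.25) := by
  rw [wheelWeight, totient_wheelModulus_div, mul_assoc]
  gcongr
  calc ((a.gcd 30 : ℕ) : ℝ) / (a.gcd 30).totient * coprimeWeight a V
      ≤ (a.gcd 30 : ℕ) / (a.gcd 30).totient * coprimeWeight (a.gcd 30) V := by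
        gcongr
        exact coprimeWeight_le_of_dvd (Nat.gcd_dvd_left a 30) V
    _ ≤ (V : ℝ) ^ 2 / 2 + 3.25 := div_totient_mul_coprimeWeight_le (gcd_thirty_mem_divisors a) V

theorem coprime_thirty_of_prime {p : ℕ} (hp : p.Prime) (h6 : 6 ≤ p) : p.Coprime 30 := by
  refine hp.coprime_iff_not_dvd.2 fun hdvd ↦ h6.not_gt ?_
  have hsmall : ∀ p ≤ 30, p.Prime → p ∣ 30 → p < 6 := by decide +kernel
  exact hsmall p (Nat.le_of_dvd (by norm_num) hdvd) hp hdvd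

theorem primeCounting_le_piStar_add_wheelWeight {a b V : ℕ} (ha : 2 ≤ a) (hab : a < b)
    (h : a.Coprime b) (hV : 1 ≤ V) (hb : 6 ≤ b) :
    (primeCounting (V * b) : ℝ) ≤
      piStar a b + 2 + b / a * wheelWeight a V + 2.6 * (V - 1) := by
  set m := wheelModulus a with hm
  have hm30 : m ∣ 30 := Nat.dvd_of_mem_divisors (wheelModulus_mem_divisors a)
  have hκ : (m.totient : ℝ) / m ≤ 1 :=
    div_le_one_of_le₀ (Nat.cast_le.2 (Nat.totient_le m)) m.cast_nonneg
  have hV1 : (1 : ℝ) ≤ V := Nat.one_le_cast.2 hV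
  calc (primeCounting (V * b) : ℝ)
      ≤ piStar a b + 2 + m.totient / m * (b / a) * coprimeWeight a V +
          (m.totient / m + 1.6) * (V - 1) := by
        refine primeCounting_le_piStar_add_of_row_le ha hab h hV (by positivity) (by norm_num)
          fun v U hv _ ↦ ?_
        refine le_trans ?_ (card_filter_coprime_mul_add_le (wheelModulus_mem_divisors a)
          (coprime_wheelModulus a) (b * v) U)
        gcongr with u
        exact fun hp ↦ (coprime_thirty_of_prime hp (by nlinarith)).coprime_dvd_right hm30
    _ ≤ piStar a b + 2 + m.totient / m * (b / a) * coprimeWeight a V + (1 + 1.6) * (V - 1) := by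
        gcongr
    _ = piStar a b + 2 + b / a * wheelWeight a V + 2.6 * (V - 1) := by
        rw [wheelWeight, ← hm]
        ring

theorem primeCounting_le_piStar_add_div_log {a b V Q : ℕ} (ha : 2 ≤ a) (hab : a < b)
    (h : a.Coprime b) (hV : 1 ≤ V) (hQ : 1 ≤ Q) (hQb : Q < b) :
    (primeCounting (V * b) : ℝ) ≤ piStar a b + 2 +
      b / a * (a / a.totient * coprimeWeight a V) / log (Q + 1) + (1 + (Q : ℝ) ^ 2) * (V - 1) := by
  have hG := one_le_selbergSum a hQ
  have hG0 := selbergSum_pos a hQ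
  have hV1 : (1 : ℝ) ≤ V := Nat.one_le_cast.2 hV
  have hlog : 0 < log (Q + 1) := log_pos (lt_add_of_pos_left 1 (Nat.cast_pos.2 hQ))
  have hκ : (selbergSum a Q)⁻¹ ≤ a / a.totient / log (Q + 1) := by
    rw [inv_le_iff_one_le_mul₀ hG0, div_mul_eq_mul_div, one_le_div hlog]
    exact log_add_one_le_mul_selbergSum (by omega) Q
  calc (primeCounting (V * b) : ℝ)
      ≤ piStar a b + 2 + (selbergSum a Q)⁻¹ * (b / a) * coprimeWeight a V +
          ((selbergSum a Q)⁻¹ + (Q : ℝ) ^ 2) * (V - 1) := by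
        refine primeCounting_le_piStar_add_of_row_le ha hab h hV (by positivity) (by positivity)
          fun v U hv _ ↦ ?_
        rw [inv_mul_eq_div]
        refine le_trans ?_ (card_filter_prime_mul_add_le a (b * v) U hQ)
        gcongr with u
        exact fun hp ↦ ⟨hp, by nlinarith⟩
    _ ≤ piStar a b + 2 + a / a.totient / log (Q + 1) * (b / a) * coprimeWeight a V +
          (1 + (Q : ℝ) ^ 2) * (V - 1) := by
        gcongr
        exact inv_le_one_of_one_le₀ hG
    _ = _ := by ring

end WheelAndSelbergBounds

section SmallCases

theorem S_le_mul (a b : ℕ) : S a b ≤ a * b := (Nat.sub_le _ _).trans (Nat.sub_le _ _)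

theorem primeCounting_sub_one_le_piStar_add_one {a b : ℕ} (ha : 2 ≤ a) (hab : a < b)
    (h : a.Coprime b) : primeCounting (b - 1) ≤ piStar a b + 1 := by
  have hsub : (({p ∈ range b | p.Prime}.erase a : Finset ℕ) : Set ℕ) ⊆
      {p | p.Prime ∧ ¬ ∃ u v : ℕ, p = a * u + b * v} := by
    intro p hp
    obtain ⟨hpa, hp⟩ := mem_erase.1 hp
    obtain ⟨hpb, hprime⟩ := mem_filter.1 hp
    refine ⟨hprime, ?_⟩
    rintro ⟨u, v, rfl⟩
    obtain rfl : v = 0 := by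
      refine Nat.eq_zero_of_not_pos fun hv ↦ (mem_range.1 hpb).not_ge ?_
      exact (Nat.le_mul_of_pos_right b hv).trans (Nat.le_add_left _ _)
    rw [mul_zero, add_zero] at hpa hprime
    rcases (Nat.dvd_prime hprime).1 (dvd_mul_right a u) with ha1 | hau
    · omega
    · exact hpa hau.symm
  have hcard := Set.ncard_le_ncard hsub (finite_setOf_prime_not_exists_eq_add ha (by omega) h)
  rw [Set.ncard_coe_finset] at hcard
  rw [primeCounting_eq_card, Nat.sub_add_cancel (by omega)]
  exact Nat.sub_le_iff_le_add.1 (pred_card_le_card_erase.trans hcard)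

theorem coprime_primorial_of_prime {k p : ℕ} (hp : p.Prime) (hkp : k < p) :
    p.Coprime (primorial k) :=
  Nat.Coprime.prod_right fun q hq ↦ by
    obtain ⟨hqk, hq⟩ := mem_filter.1 hq
    exact (Nat.coprime_primes hp hq).2 (by have := mem_range.1 hqk; omega)

theorem prime_of_coprime_primorial {k n : ℕ} (hn : 2 ≤ n) (hnk : n < (k + 1) ^ 2)
    (h : n.Coprime (primorial k)) : n.Prime := by
  by_contra hprime
  have hmin : n.minFac.Prime := Nat.minFac_prime (by omega)
  have hle : n.minFac < k + 1 := lt_of_pow_lt_pow_left₀ 2 (Nat.zero_le _)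
    ((Nat.minFac_sq_le_self (by omega) hprime).trans_lt hnk)
  exact Nat.not_coprime_of_dvd_of_dvd hmin.one_lt n.minFac_dvd
    (dvd_prod_of_mem id (mem_filter.2 ⟨mem_range.2 hle, hmin⟩)) h

theorem coprimeCount_zero_eq_card (m N : ℕ) :
    coprimeCount m 0 (N + 1) = #{n ∈ range (N + 1) | n.Coprime m} := by
  rw [coprimeCount_eq_card, add_zero, range_eq_Ico]

theorem primeCounting_le_add_coprimeCount_primorial (k N : ℕ) :
    primeCounting N ≤ primeCounting k + coprimeCount (primorial k) 0 (N + 1) := by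
  rw [primeCounting_eq_card, primeCounting_eq_card, coprimeCount_zero_eq_card]
  refine (card_le_card fun p hp ↦ ?_).trans (card_union_le _ _)
  obtain ⟨hpN, hp⟩ := mem_filter.1 hp
  rcases le_or_gt p k with hpk | hkp
  · exact mem_union_left _ (mem_filter.2 ⟨mem_range.2 (by omega), hp⟩)
  · exact mem_union_right _ (mem_filter.2 ⟨hpN, coprime_primorial_of_prime hp hkp⟩)

theorem add_coprimeCount_primorial_le {k N : ℕ} (hk : 2 ≤ k) (hkN : k ≤ N)
    (hN : N < (k + 1) ^ 2) :
    primeCounting k + coprimeCount (primorial k) 0 (N + 1) ≤ primeCounting N + 1 := by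
  rw [primeCounting_eq_card, primeCounting_eq_card, coprimeCount_zero_eq_card]
  set small : Finset ℕ := {p ∈ range (k + 1) | p.Prime}
  set rough : Finset ℕ := {n ∈ range (N + 1) | n.Coprime (primorial k)}
  have hdvd : ∀ p ∈ small, p ∣ primorial k := fun p hp ↦ dvd_prod_of_mem id hp
  have hdisj : Disjoint small (rough.erase 1) := disjoint_left.2 fun p hp hp' ↦ by
    exact Nat.not_coprime_of_dvd_of_dvd (mem_filter.1 hp).2.one_lt dvd_rfl (hdvd p hp)
      (mem_filter.1 (mem_of_mem_erase hp')).2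
  have hsub : small ∪ rough.erase 1 ⊆ {p ∈ range (N + 1) | p.Prime} := by
    refine union_subset (filter_subset_filter _ (range_subset_range.2 (by omega))) fun n hn ↦ ?_
    obtain ⟨hn1, hn⟩ := mem_erase.1 hn
    obtain ⟨hnN, hcop⟩ := mem_filter.1 hn
    have hn0 : n ≠ 0 := by
      rintro rfl
      exact Nat.not_coprime_of_dvd_of_dvd one_lt_two (dvd_zero 2)
        (hdvd 2 (mem_filter.2 ⟨mem_range.2 (by omega), Nat.prime_two⟩)) hcop
    have hnN' := mem_range.1 hnN
    exact mem_filter.2 ⟨hnN, prime_of_coprime_primorial (by omega) (by omega) hcop⟩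
  have hcard := card_le_card hsub
  rw [card_union_of_disjoint hdisj] at hcard
  have herase : #rough - 1 ≤ #(rough.erase 1) := pred_card_le_card_erase
  omega

theorem primeCounting_2000_le : primeCounting 2000 ≤ 325 :=
  (primeCounting_le_add_coprimeCount_primorial 84 2000).trans (by decide +kernel)

theorem primeCounting_3600_le : primeCounting 3600 ≤ 700 :=
  (primeCounting_le_add_coprimeCount_primorial 84 3600).trans (by decide +kernel)

theorem primeCounting_5400_le : primeCounting 5400 ≤ 1125 :=
  (primeCounting_le_add_coprimeCount_primorial 84 5400).trans (by decide +kernel)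

theorem primeCounting_7200_le : primeCounting 7200 ≤ 1525 :=
  (primeCounting_le_add_coprimeCount_primorial 84 7200).trans (by decide +kernel)

theorem primeCounting_mul_sub_one_add_le {b : ℕ} (hb : 4 ≤ b) (hb' : b < 45) :
    primeCounting (b * (b - 1)) + 25 ≤ 25 * primeCounting (b - 1) := by
  have hcheck : ∀ b < 45, 4 ≤ b → primeCounting 44 +
      coprimeCount (primorial 44) 0 (b * (b - 1) + 1) + 25 ≤ 25 * primeCounting (b - 1) := by
    decide +kernel
  have hupper := primeCounting_le_add_coprimeCount_primorial 44 (b * (b - 1))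
  linarith [hcheck b hb' hb]

theorem add_160_le_eight_mul_primeCounting {N : ℕ} (h : 240 ≤ N) (h' : N ≤ 2400) :
    N + 160 ≤ 8 * primeCounting N := by
  have hcheck : ∀ k < 151, 15 ≤ k →
      2 * k + 23 ≤ primeCounting 48 + coprimeCount (primorial 48) 0 (16 * k + 1) := by
    decide +kernel
  have hblock := hcheck (N / 16) (by omega) (by omega)
  have hlower := add_coprimeCount_primorial_le (k := 48) (N := 16 * (N / 16)) (by norm_num)
    (by omega) (by omega)
  have hmono := Nat.monotone_primeCounting (Nat.mul_div_le N 16)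
  omega

theorem primeCounting_S_le_of_mul_le {a b : ℕ} (ha : 2 ≤ a) (hab : a < b) (h : a.Coprime b)
    (hN : a * b ≤ 2000) : primeCounting (S a b) ≤ 25 * piStar a b := by
  have hlower := primeCounting_sub_one_le_piStar_add_one ha hab h
  obtain rfl | hb3 := eq_or_ne b 3
  · obtain rfl : a = 2 := by omega
    exact (by decide +kernel : primeCounting (S 2 3) = 0).trans_le (Nat.zero_le _)
  rcases lt_or_ge b 45 with hb | hb
  · have hS : S a b ≤ b * (b - 1) := (S_le_mul a b).trans <| by
      rw [mul_comm]
      exact Nat.mul_le_mul_left b (by omega)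
    linarith [Nat.monotone_primeCounting hS,
      primeCounting_mul_sub_one_add_le (b := b) (by omega) hb]
  · have h44 : 14 ≤ primeCounting (b - 1) :=
      (by decide +kernel : 14 ≤ primeCounting 44).trans
        (Nat.monotone_primeCounting (by omega : 44 ≤ b - 1))
    linarith [Nat.monotone_primeCounting ((S_le_mul a b).trans hN), primeCounting_2000_le]

theorem primeCounting_S_le_of_le_eighteen {a b : ℕ} (ha : 2 ≤ a) (ha' : a ≤ 18) (hab : a < b)
    (h : a.Coprime b) (hb : 112 ≤ b) (hb' : b < 400) :
    primeCounting (S a b) ≤ 25 * piStar a b := by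
  have hlower := primeCounting_sub_one_le_piStar_add_one ha hab h
  have hS : S a b ≤ 18 * b := (S_le_mul a b).trans (Nat.mul_le_mul_right b ha')
  have hmono {c B d N : ℕ} (hc : c ≤ primeCounting d) (hd : d ≤ b - 1)
      (hB : primeCounting N ≤ B) (hN : 18 * b ≤ N) (hcB : B + 25 ≤ 25 * c) :
      primeCounting (S a b) ≤ 25 * piStar a b := by
    have hSN := Nat.monotone_primeCounting (hS.trans hN)
    have hdb := Nat.monotone_primeCounting hd
    omega
  rcases le_or_gt b 200 with h200 | h200
  · exact hmono (by decide +kernel : 29 ≤ primeCounting 111) (by omega) primeCounting_3600_le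
      (by omega) (by norm_num)
  rcases le_or_gt b 300 with h300 | h300
  · exact hmono (by decide +kernel : 46 ≤ primeCounting 199) (by omega) primeCounting_5400_le
      (by omega) (by norm_num)
  · exact hmono (by decide +kernel : 62 ≤ primeCounting 299) (by omega) primeCounting_7200_le
      (by omega) (by norm_num)

end SmallCases

section ExplicitLogarithms

theorem log_two_zpow_mul_three_zpow_mul_five_zpow (i j k : ℤ) :
    log (2 ^ i * 3 ^ j * 5 ^ k) = i * log 2 + j * log 3 + k * log 5 := by
  rw [log_mul (by positivity) (by positivity), log_mul (by positivity) (by positivity), log_zpow,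
    log_zpow, log_zpow]

theorem log_le_of_le_two_pow_mul_three_pow_mul_five_pow {x : ℝ} (i j k : ℕ) (hx : 0 < x)
    (h : x ≤ 2 ^ i * 3 ^ j * 5 ^ k) :
    log x ≤ i * 0.6931471808 + j * 1.0986122888 + k * 1.6094379126 := by
  have heq := log_two_zpow_mul_three_zpow_mul_five_zpow i j k
  simp only [zpow_natCast, Int.cast_natCast] at heq
  calc log x ≤ i * log 2 + j * log 3 + k * log 5 := (log_le_log hx h).trans_eq heq
    _ ≤ _ := by
      gcongr
      exacts [log_two_lt_d9.le, log_three_lt_d9.le, log_five_lt_d9.le]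

theorem le_log_eighteen : 2.89 ≤ log 18 := by
  have heq := log_two_zpow_mul_three_zpow_mul_five_zpow 1 2 0
  norm_num at heq
  linarith [log_two_gt_d9, log_three_gt_d9]

theorem le_log_of_2000_le {t : ℝ} (ht : 2000 ≤ t) : 7.6 ≤ log t := by
  have heq := log_two_zpow_mul_three_zpow_mul_five_zpow 4 0 3
  norm_num at heq
  linarith [log_two_gt_d9, log_five_gt_d9, log_le_log (by norm_num) ht]

theorem le_log_of_30000000_le {t : ℝ} (ht : 30000000 ≤ t) : 17.2167 ≤ log t := by
  have heq := log_two_zpow_mul_three_zpow_mul_five_zpow 7 1 7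
  norm_num at heq
  linarith [log_two_gt_d9, log_three_gt_d9, log_five_gt_d9, log_le_log (by norm_num) ht]

theorem le_log_of_25_div_4_le {t : ℝ} (ht : 25 / 4 ≤ t) : 1.83 ≤ log t := by
  have heq := log_two_zpow_mul_three_zpow_mul_five_zpow (-2) 0 2
  norm_num at heq
  linarith [log_two_lt_d9, log_five_gt_d9, log_le_log (by norm_num) ht]

theorem le_log_of_192_div_25_le {t : ℝ} (ht : 192 / 25 ≤ t) : 2.03 ≤ log t := by
  have heq := log_two_zpow_mul_three_zpow_mul_five_zpow 6 1 (-2)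
  norm_num at heq
  linarith [log_two_gt_d9, log_three_gt_d9, log_five_lt_d9, log_le_log (by norm_num) ht]

theorem le_log_of_81_div_10_le {t : ℝ} (ht : 81 / 10 ≤ t) : 2.09 ≤ log t := by
  have heq := log_two_zpow_mul_three_zpow_mul_five_zpow (-1) 4 (-1)
  norm_num at heq
  linarith [log_two_lt_d9, log_three_gt_d9, log_five_lt_d9, log_le_log (by norm_num) ht]

theorem log_625_div_2_le : log (625 / 2) ≤ 5.7447 := by
  have heq := log_two_zpow_mul_three_zpow_mul_five_zpow (-1) 0 4
  norm_num at heq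
  linarith [log_two_gt_d9, log_five_lt_d9]

end ExplicitLogarithms

section Comparison

theorem primeCounting_le_of_le {M N : ℕ} (hMN : M ≤ N) (hN : 2000 ≤ N) :
    (primeCounting M : ℝ) ≤ 1.1135 * (N / log N) + 2.2181 * (N / log N ^ 2) + 10 := by
  have hlog : log (N : ℝ) ≠ 0 := (log_pos (by exact_mod_cast (by omega : 1 < N))).ne'
  calc (primeCounting M : ℝ) ≤ primeCounting N := Nat.cast_le.2 (Nat.monotone_primeCounting hMN)
    _ ≤ (1.1135 * N + 10 * log N) / log N + 2.2181 * N / log N ^ 2 := primeCounting_le hN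
    _ = _ := by field_simp; ring

theorem div_add_mul_div_sq_le_div {X x l L : ℝ} (hX : 0 ≤ X) (hl : 0 < l) (hL : 0 < L)
    (h : l + x ≤ L) : X / L + x * (X / L ^ 2) ≤ X / l := by
  have hsq : (L + x) * l ≤ L ^ 2 := by nlinarith [sq_nonneg (L - l)]
  calc X / L + x * (X / L ^ 2) = X * (L + x) / L ^ 2 := by field_simp
    _ ≤ X / l := by
      rw [div_le_div_iff₀ (by positivity) hl, mul_assoc]
      gcongr

theorem le_primeCounting_of_log_add_le {N : ℕ} {x L : ℝ} (hN : 60 ≤ N) (hL : 0 < L)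
    (hx : log N + x ≤ L) :
    0.92129 * (N / L + x * (N / L ^ 2)) - 5 ≤ primeCounting N := by
  have hlog : 0 < log (N : ℝ) := log_pos (by exact_mod_cast (by omega : 1 < N))
  calc 0.92129 * (N / L + x * (N / L ^ 2)) - 5 ≤ 0.92129 * (N / log N) - 5 := by
        gcongr
        exact div_add_mul_div_sq_le_div N.cast_nonneg hlog hL hx
    _ = (0.92129 * N - 5 * log N) / log N := by field_simp
    _ ≤ primeCounting N := (div_le_iff₀ hlog).2 (le_primeCounting_mul_log hN)

theorem mul_primeCounting_S_le_piStar_of_error_le {a b V : ℕ} {x E : ℝ}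
    (hVa : 12 * a ≤ 100 * V) (hN : 2000 ≤ a * b) (hx : x ≤ log ((a : ℝ) / V))
    (hE : (primeCounting (V * b) : ℝ) ≤ piStar a b + 2 + E)
    (hmain : (E + 7.4) * log ((a : ℝ) * b) ≤
      V * b * (0.5501 + (0.92129 * x - 0.7394) / log ((a : ℝ) * b))) :
    0.04 * (primeCounting (S a b) : ℝ) ≤ piStar a b := by
  have hX : 60 ≤ V * b := by nlinarith
  have ha0 : (a : ℝ) ≠ 0 := by rintro h0; simp_all
  have hb0 : (b : ℝ) ≠ 0 := by rintro h0; simp_all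
  have hV0 : (V : ℝ) ≠ 0 := by rintro h0; simp_all
  have hsize : (a : ℝ) * b ≤ 8.33334 * (V * b) := by
    have hcast : (12 : ℝ) * (a * b) ≤ 100 * (V * b) := by
      exact_mod_cast (by nlinarith : 12 * (a * b) ≤ 100 * (V * b))
    have hnonneg : (0 : ℝ) ≤ V * b := by positivity
    linarith
  have hupper := primeCounting_le_of_le (S_le_mul a b) hN
  have hL : 0 < log ((a : ℝ) * b) := by
    linarith [le_log_of_2000_le (t := (a : ℝ) * b) (by exact_mod_cast hN)]
  have hlog : log ((V * b : ℕ) : ℝ) + x ≤ log ((a : ℝ) * b) := by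
    rw [Nat.cast_mul, log_mul hV0 hb0, log_mul ha0 hb0]
    rw [log_div ha0 hV0] at hx
    linarith
  have hlower := le_primeCounting_of_log_add_le hX hL hlog
  push_cast at hupper hlower
  set L := log ((a : ℝ) * b)
  have hmain' : E + 7.4 ≤
      0.5501 * (V * b / L) + (0.92129 * x - 0.7394) * (V * b / L ^ 2) := by
    refine ((le_div_iff₀ hL).2 hmain).trans_eq ?_
    field_simp
  have hfirst : (a : ℝ) * b / L ≤ 8.33334 * (V * b / L) := by
    rw [← mul_div_assoc]
    gcongr
  have hsecond : (a : ℝ) * b / L ^ 2 ≤ 8.33334 * (V * b / L ^ 2) := by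
    rw [← mul_div_assoc]
    gcongr
  have hpos : 0 ≤ (V : ℝ) * b / L := by positivity
  have hpos' : 0 ≤ (V : ℝ) * b / L ^ 2 := by positivity
  linarith

theorem div_mul_le_of_le_mul_mul {a b V w y : ℝ} (ha : 0 < a) (hb : 0 ≤ b)
    (h : w ≤ y * (a * V)) : b / a * w ≤ y * (V * b) :=
  calc b / a * w ≤ b / a * (y * (a * V)) := by gcongr
    _ = y * (V * b) := by field_simp

theorem mul_primeCounting_S_le_piStar_of_wheelWeight_le {a b V : ℕ} {x y k M b₀ : ℝ} (ha : 2 ≤ a)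
    (hab : a < b) (h : a.Coprime b) (hVa : 12 * a ≤ 100 * V) (hN : 2000 ≤ a * b)
    (hx : x ≤ log ((a : ℝ) / V)) (hx' : 0.7394 ≤ 0.92129 * x)
    (hw : wheelWeight a V ≤ y * (a * V)) (hy : 0 ≤ y) (hk : 4.8 + 2.6 * V ≤ k * V)
    (hM : log ((a : ℝ) * b) ≤ M) (hb₀ : 0 < b₀) (hb : b₀ ≤ b)
    (hfin : (y + k / b₀) * M ≤ 0.5501 + (0.92129 * x - 0.7394) / M) :
    0.04 * (primeCounting (S a b) : ℝ) ≤ piStar a b := by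
  have hV : 1 ≤ V := by omega
  have hV0 : (0 : ℝ) < V := Nat.cast_pos.2 hV
  have hE := primeCounting_le_piStar_add_wheelWeight ha hab h hV (by nlinarith)
  rw [add_assoc] at hE
  refine mul_primeCounting_S_le_piStar_of_error_le hVa hN hx hE ?_
  have hrow := div_mul_le_of_le_mul_mul (by positivity) b.cast_nonneg hw
  have hL : 0 < log ((a : ℝ) * b) := by
    linarith [le_log_of_2000_le (t := (a : ℝ) * b) (by exact_mod_cast hN)]
  have hk0 : 0 ≤ k := by nlinarith
  have herror : k * V ≤ k / b₀ * (V * b) := by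
    rw [div_mul_eq_mul_div, le_div_iff₀ hb₀, mul_assoc]
    gcongr
  calc (b / a * wheelWeight a V + 2.6 * (V - 1) + 7.4) * log ((a : ℝ) * b)
      ≤ V * b * (y + k / b₀) * log ((a : ℝ) * b) := by
        gcongr
        linarith
    _ ≤ V * b * ((y + k / b₀) * M) := by
        rw [mul_assoc]
        gcongr
    _ ≤ V * b * (0.5501 + (0.92129 * x - 0.7394) / log ((a : ℝ) * b)) := by
        gcongr
        refine hfin.trans ?_
        gcongr

theorem exists_sieveLevel {b : ℕ} (hb : 30000000 ≤ b) :
    ∃ Q : ℕ, 3 ≤ Q ∧ Q < b ∧ log b ≤ 3 * log (Q + 1) ∧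
      6 * log (Q + 1) * (1 + (Q : ℝ) ^ 2) ≤ 0.1115 * b := by
  set Q := Nat.nthRoot 3 b
  have hQ : 310 ≤ Q := (Nat.le_nthRoot_iff (by norm_num)).2 (by omega)
  have hQb : Q ^ 3 ≤ b := (Nat.le_nthRoot_iff (by norm_num)).1 le_rfl
  have hQ' : (310 : ℝ) ≤ Q := by exact_mod_cast hQ
  refine ⟨Q, by omega, (lt_self_pow₀ (by omega) (by norm_num)).trans_le hQb, ?_, ?_⟩
  · have hcube : (b : ℝ) ≤ ((Q : ℝ) + 1) ^ 3 := by
      exact_mod_cast (Nat.lt_pow_nthRoot_add_one (by norm_num) b).le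
    refine (log_le_log (Nat.cast_pos.2 (by omega)) hcube).trans_eq ?_
    rw [log_pow, Nat.cast_ofNat]
  · have hlog : log ((Q : ℝ) + 1) ≤ 0.01852 * Q := by
      have htangent := mul_log_le_mul_log_add_sub (x := (Q : ℝ) + 1) (y := 625 / 2)
        (by positivity) (by norm_num)
      linarith [log_625_div_2_le]
    calc 6 * log ((Q : ℝ) + 1) * (1 + (Q : ℝ) ^ 2)
        ≤ 6 * (0.01852 * Q) * (1 + (Q : ℝ) ^ 2) := by gcongr
      _ ≤ 0.1115 * (Q : ℝ) ^ 3 := by nlinarith [sq_nonneg (Q : ℝ)]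
      _ ≤ 0.1115 * b := by
        gcongr
        exact_mod_cast hQb

theorem mul_primeCounting_S_le_piStar_of_coprimeWeight_le {a b V : ℕ} {y : ℝ} (ha : 2 ≤ a)
    (hab : a < b) (h : a.Coprime b) (hVa : 12 * a ≤ 100 * V) (hb : 30000000 ≤ b)
    (hx : 1.83 ≤ log ((a : ℝ) / V)) (hw : (a : ℝ) / a.totient * coprimeWeight a V ≤ y * (a * V))
    (hfin : 3 * y * (log a + log b) ≤ 0.4385 * log b) :
    0.04 * (primeCounting (S a b) : ℝ) ≤ piStar a b := by
  obtain ⟨Q, hQ, hQb, hlogQ, herror⟩ := exists_sieveLevel hb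
  have hV : 1 ≤ V := by omega
  have ha0 : (0 : ℝ) < a := Nat.cast_pos.2 (by omega)
  have hb0 : (0 : ℝ) < b := Nat.cast_pos.2 (by omega)
  have hQ' : (3 : ℝ) ≤ Q := by exact_mod_cast hQ
  have hlogb : 17.2167 ≤ log (b : ℝ) := le_log_of_30000000_le (by exact_mod_cast hb)
  have hlogab : log (a : ℝ) ≤ log b := log_le_log ha0 (Nat.cast_le.2 hab.le)
  have hE := primeCounting_le_piStar_add_div_log ha hab h hV (by omega) hQb
  rw [add_assoc] at hE
  refine mul_primeCounting_S_le_piStar_of_error_le hVa (by nlinarith) hx hE ?_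
  rw [log_mul ha0.ne' hb0.ne']
  have hL : 0 < log (a : ℝ) + log b := by linarith [log_natCast_nonneg a]
  set L := log (a : ℝ) + log b
  set q := log ((Q : ℝ) + 1)
  have hq : 0 < q := by linarith
  have hrow := div_mul_le_of_le_mul_mul ha0 hb0.le hw
  have hmainTerm : y * L / q ≤ 0.4385 := (div_le_iff₀ hq).2 (by linarith)
  have hlevel : (1 + (Q : ℝ) ^ 2) * L ≤ 0.1115 * b := by
    refine le_trans ?_ herror
    rw [mul_comm]
    gcongr
    linarith
  have hconst : (1 + (Q : ℝ) ^ 2) * (V - 1) + 7.4 ≤ (1 + (Q : ℝ) ^ 2) * V := by nlinarith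
  calc (b / a * (a / a.totient * coprimeWeight a V) / q + (1 + (Q : ℝ) ^ 2) * (V - 1) + 7.4) * L
      ≤ (y * (V * b) / q + (1 + (Q : ℝ) ^ 2) * V) * L := by
        rw [add_assoc]
        gcongr
    _ = V * b * (y * L / q) + V * ((1 + (Q : ℝ) ^ 2) * L) := by ring
    _ ≤ V * b * 0.4385 + V * (0.1115 * b) := by gcongr
    _ = V * b * (0.55 + 0) := by ring
    _ ≤ V * b * (0.5501 + (0.92129 * 1.83 - 0.7394) / L) := by
      gcongr
      · norm_num
      · exact div_nonneg (by norm_num) hL.le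

end Comparison

section NumberOfRows

/-- The number `V = ⌈0.12 a⌉` of rows `b v + a u`, `v < V`, that are removed from the primes up to
`V b` to bound `piStar a b` from below. -/
def numRows (a : ℕ) : ℕ := (12 * a + 99) / 100

theorem le_numRows (a : ℕ) : 12 * a ≤ 100 * numRows a := by
  unfold numRows
  omega

theorem numRows_le (a : ℕ) : 100 * numRows a ≤ 12 * a + 99 := by
  unfold numRows
  omega

theorem le_div_numRows {a p q : ℕ} (ha : 0 < a) (hq : 0 < q) (h : p * numRows a ≤ q * a) :
    (p : ℝ) / q ≤ a / numRows a := by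
  have hV : 0 < numRows a := by
    have := le_numRows a
    omega
  rw [div_le_div_iff₀ (Nat.cast_pos.2 hq) (Nat.cast_pos.2 hV), mul_comm (a : ℝ)]
  exact_mod_cast h

theorem le_log_div_numRows_of_19_le {a : ℕ} (ha : 19 ≤ a) :
    1.83 ≤ log ((a : ℝ) / numRows a) := by
  have hV := numRows_le a
  refine le_log_of_25_div_4_le ?_
  exact_mod_cast le_div_numRows (p := 25) (q := 4) (by omega) (by norm_num) (by omega)

theorem le_log_div_numRows_of_100_le {a : ℕ} (ha : 100 ≤ a) :
    2.03 ≤ log ((a : ℝ) / numRows a) := by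
  have hV := numRows_le a
  refine le_log_of_192_div_25_le ?_
  exact_mod_cast le_div_numRows (p := 192) (q := 25) (by omega) (by norm_num) (by omega)

theorem le_log_div_numRows_of_1000_le {a : ℕ} (ha : 1000 ≤ a) :
    2.09 ≤ log ((a : ℝ) / numRows a) := by
  have hV := numRows_le a
  refine le_log_of_81_div_10_le ?_
  exact_mod_cast le_div_numRows (p := 81) (q := 10) (by omega) (by norm_num) (by omega)

theorem numRows_sq_le_of_100_le {a : ℕ} (ha : 100 ≤ a) :
    (numRows a : ℝ) ^ 2 / 2 + 3.25 ≤ 0.0677 * (a * numRows a) := by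
  have hlo : (12 : ℝ) * a ≤ 100 * numRows a := by exact_mod_cast le_numRows a
  have hhi : (100 : ℝ) * numRows a ≤ 12 * a + 99 := by exact_mod_cast numRows_le a
  have ha' : (100 : ℝ) ≤ a := by exact_mod_cast ha
  nlinarith

theorem numRows_sq_le_of_1000_le {a : ℕ} (ha : 1000 ≤ a) :
    (numRows a : ℝ) ^ 2 / 2 + 3.25 ≤ 0.060525 * (a * numRows a) := by
  have hlo : (12 : ℝ) * a ≤ 100 * numRows a := by exact_mod_cast le_numRows a
  have hhi : (100 : ℝ) * numRows a ≤ 12 * a + 99 := by exact_mod_cast numRows_le a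
  have ha' : (1000 : ℝ) ≤ a := by exact_mod_cast ha
  nlinarith

end NumberOfRows

section WeightsOfRows

set_option maxRecDepth 100000 in
theorem totient_wheelModulus_mul_coprimeWeight_numRows_le :
    ∀ a < 100, 19 ≤ a → 40 * ((wheelModulus a).totient * coprimeWeight a (numRows a)) ≤
      wheelModulus a * (a * numRows a) := by
  decide +kernel

set_option maxRecDepth 100000 in
theorem mul_coprimeWeight_numRows_le :
    ∀ a < 100, 19 ≤ a → 125 * (a * coprimeWeight a (numRows a)) ≤
      12 * (a.totient * (a * numRows a)) := by
  decide +kernel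

theorem wheelWeight_numRows_le_of_lt_100 {a : ℕ} (ha : 19 ≤ a) (ha' : a < 100) :
    wheelWeight a (numRows a) ≤ 0.025 * (a * numRows a) := by
  have hm : (0 : ℝ) < wheelModulus a :=
    Nat.cast_pos.2 (Nat.pos_of_mem_divisors (wheelModulus_mem_divisors a))
  have htable : (40 : ℝ) * ((wheelModulus a).totient * coprimeWeight a (numRows a)) ≤
      wheelModulus a * (a * numRows a) := by
    exact_mod_cast totient_wheelModulus_mul_coprimeWeight_numRows_le a ha' ha
  rw [wheelWeight, div_mul_eq_mul_div, div_le_iff₀ hm]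
  linarith

theorem wheelWeight_numRows_le_of_100_le {a : ℕ} (ha : 100 ≤ a) :
    wheelWeight a (numRows a) ≤ 0.0181 * (a * numRows a) := by
  have hnonneg : (0 : ℝ) ≤ a * numRows a := by positivity
  linarith [wheelWeight_le a (numRows a), numRows_sq_le_of_100_le ha]

theorem wheelWeight_numRows_le_of_1000_le {a : ℕ} (ha : 1000 ≤ a) :
    wheelWeight a (numRows a) ≤ 0.01615 * (a * numRows a) := by
  have hnonneg : (0 : ℝ) ≤ a * numRows a := by positivity
  linarith [wheelWeight_le a (numRows a), numRows_sq_le_of_1000_le ha]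

theorem coprimeWeight_numRows_le_of_lt_100 {a : ℕ} (ha : 19 ≤ a) (ha' : a < 100) :
    (a : ℝ) / a.totient * coprimeWeight a (numRows a) ≤ 0.096 * (a * numRows a) := by
  have hφ : (0 : ℝ) < a.totient := Nat.cast_pos.2 (Nat.totient_pos.2 (by omega))
  have htable : (125 : ℝ) * (a * coprimeWeight a (numRows a)) ≤
      12 * (a.totient * (a * numRows a)) := by
    exact_mod_cast mul_coprimeWeight_numRows_le a ha' ha
  rw [div_mul_eq_mul_div, div_le_iff₀ hφ]
  linarith

theorem coprimeWeight_numRows_le_of_lt_1000 {a : ℕ} (ha : 100 ≤ a) (ha' : a < 1000) :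
    (a : ℝ) / a.totient * coprimeWeight a (numRows a) ≤ 0.10001 * (a * numRows a) := by
  have hnonneg : (0 : ℝ) ≤ a * numRows a := by positivity
  linarith [div_totient_mul_coprimeWeight_le_of_lt (a := a) (by omega) (by omega) (numRows a),
    numRows_sq_le_of_100_le ha]

theorem coprimeWeight_numRows_le_of_lt_323323 {a : ℕ} (ha : 1000 ≤ a) (ha' : a < 323323) :
    (a : ℝ) / a.totient * coprimeWeight a (numRows a) ≤ 0.08941 * (a * numRows a) := by
  have hnonneg : (0 : ℝ) ≤ a * numRows a := by positivity
  linarith [div_totient_mul_coprimeWeight_le_of_lt (a := a) (by omega) ha' (numRows a),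
    numRows_sq_le_of_1000_le ha]

theorem coprimeWeight_numRows_le_of_sq_le {a : ℕ} {r : ℝ} (hr : 0 < r) (hra : r ^ 2 ≤ a)
    (ha : 40000 ≤ a) :
    (a : ℝ) / a.totient * coprimeWeight a (numRows a) ≤
      (0.06002 + 5.48 / r) * (a * numRows a) := by
  have hhi : (100 : ℝ) * numRows a ≤ 12 * a + 99 := by exact_mod_cast numRows_le a
  have ha' : (40000 : ℝ) ≤ a := by exact_mod_cast ha
  have hsqrt : √(a : ℝ) ≤ a / r := by
    rw [le_div_iff₀ hr]
    calc √(a : ℝ) * r ≤ √a * √a := by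
          gcongr
          exact le_sqrt_of_sq_le hra
      _ = a := mul_self_sqrt a.cast_nonneg
  have hhalf : (numRows a : ℝ) / 2 ≤ 0.06002 * a := by linarith
  calc (a : ℝ) / a.totient * coprimeWeight a (numRows a)
      ≤ (numRows a : ℝ) ^ 2 / 2 + 5.48 * √a * numRows a :=
        div_totient_mul_coprimeWeight_le_add_sqrt (by omega) (numRows a)
    _ = (numRows a / 2 + 5.48 * √a) * numRows a := by ring
    _ ≤ (0.06002 * a + 5.48 * (a / r)) * numRows a := by gcongr
    _ = (0.06002 + 5.48 / r) * (a * numRows a) := by ring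

end WeightsOfRows

section Ranges

theorem exists_coprimeWeight_numRows_le_of_lt_50000 {a : ℕ} (ha : 19 ≤ a) (ha' : a < 50000) :
    ∃ y : ℝ, (a : ℝ) / a.totient * coprimeWeight a (numRows a) ≤ y * (a * numRows a) ∧
      3 * y * (log a + 17.2167) ≤ 0.4385 * 17.2167 ∧ 3 * y ≤ 0.4385 := by
  have ha0 : (0 : ℝ) < a := Nat.cast_pos.2 (by omega)
  rcases lt_or_ge a 100 with h100 | h100
  · have hlog := log_le_of_le_two_pow_mul_three_pow_mul_five_pow 2 0 2 ha0
      (by norm_num; exact_mod_cast h100.le)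
    norm_num at hlog
    exact ⟨0.096, coprimeWeight_numRows_le_of_lt_100 ha h100, by linarith, by norm_num⟩
  rcases lt_or_ge a 1000 with h1000 | h1000
  · have hlog := log_le_of_le_two_pow_mul_three_pow_mul_five_pow 3 0 3 ha0
      (by norm_num; exact_mod_cast h1000.le)
    norm_num at hlog
    exact ⟨0.10001, coprimeWeight_numRows_le_of_lt_1000 h100 h1000, by linarith, by norm_num⟩
  · have hlog := log_le_of_le_two_pow_mul_three_pow_mul_five_pow 4 0 5 ha0
      (by norm_num; exact_mod_cast ha'.le)
    norm_num at hlog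
    exact ⟨0.08941, coprimeWeight_numRows_le_of_lt_323323 h1000 (by omega), by linarith,
      by norm_num⟩

theorem mul_primeCounting_S_le_piStar_of_30000000_le {a b : ℕ} (ha : 19 ≤ a) (hab : a < b)
    (h : a.Coprime b) (hb : 30000000 ≤ b) : 0.04 * (primeCounting (S a b) : ℝ) ≤ piStar a b := by
  have ha0 : (0 : ℝ) < a := Nat.cast_pos.2 (by omega)
  have hlogb : 17.2167 ≤ log (b : ℝ) := le_log_of_30000000_le (by exact_mod_cast hb)
  suffices hy : ∃ y : ℝ,
      (a : ℝ) / a.totient * coprimeWeight a (numRows a) ≤ y * (a * numRows a) ∧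
        3 * y * (log a + log b) ≤ 0.4385 * log b by
    obtain ⟨y, hw, hfin⟩ := hy
    exact mul_primeCounting_S_le_piStar_of_coprimeWeight_le (by omega) hab h (le_numRows a) hb
      (le_log_div_numRows_of_19_le ha) hw hfin
  rcases lt_or_ge a 50000 with h50000 | h50000
  · obtain ⟨y, hw, hfin, hy⟩ := exists_coprimeWeight_numRows_le_of_lt_50000 ha h50000
    exact ⟨y, hw, by nlinarith⟩
  have h50000' : (50000 : ℝ) ≤ a := by exact_mod_cast h50000
  rcases lt_or_ge a 250000 with h250000 | h250000
  · have hlog := log_le_of_le_two_pow_mul_three_pow_mul_five_pow 4 0 6 ha0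
      (by norm_num; exact_mod_cast h250000.le)
    norm_num at hlog
    refine ⟨_, coprimeWeight_numRows_le_of_sq_le (r := 223.6) (by norm_num) (by linarith)
      (by omega), ?_⟩
    norm_num
    linarith
  · have hlog : log (a : ℝ) ≤ log b := log_le_log ha0 (Nat.cast_le.2 hab.le)
    have h250000' : (250000 : ℝ) ≤ a := by exact_mod_cast h250000
    refine ⟨_, coprimeWeight_numRows_le_of_sq_le (r := 500) (by norm_num) (by linarith)
      (by omega), ?_⟩
    norm_num
    linarith

theorem mul_primeCounting_S_le_piStar_of_lt_200 {a b : ℕ} (ha : 19 ≤ a) (ha' : a < 100)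
    (hab : a < b) (h : a.Coprime b) (hb : b < 200) (hN : 2000 ≤ a * b) :
    0.04 * (primeCounting (S a b) : ℝ) ≤ piStar a b := by
  have hlo := le_numRows a
  have hhi := numRows_le a
  have hN' : (2000 : ℝ) ≤ a * b := by exact_mod_cast hN
  have hL : 7.6 ≤ log ((a : ℝ) * b) := le_log_of_2000_le hN'
  have hX : 240 ≤ numRows a * b := by nlinarith
  have hX' : numRows a * b ≤ 12 * 200 := Nat.mul_le_mul (by omega) hb.le
  have hrow := div_mul_le_of_le_mul_mul (b := b) (by positivity) b.cast_nonneg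
    (wheelWeight_numRows_le_of_lt_100 ha ha')
  have hlower : ((numRows a : ℝ) * b) + 160 ≤ 8 * primeCounting (numRows a * b) := by
    exact_mod_cast add_160_le_eight_mul_primeCounting hX hX'
  have hdecomp := primeCounting_le_piStar_add_wheelWeight (by omega) hab h
    (by omega : 1 ≤ numRows a) (by omega)
  have hupper : (primeCounting (S a b) : ℝ) ≤
      0.18492 * (a * b) + 10 := by
    calc (primeCounting (S a b) : ℝ)
        ≤ 1.1135 * (a * b / log (a * b)) + 2.2181 * (a * b / log (a * b) ^ 2) + 10 := by
          exact_mod_cast primeCounting_le_of_le (S_le_mul a b) hN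
      _ ≤ 1.1135 * (a * b / 7.6) + 2.2181 * (a * b / 7.6 ^ 2) + 10 := by gcongr
      _ ≤ 0.18492 * (a * b) + 10 := by
        norm_num
        linarith
  have hsize : (12 : ℝ) * (a * b) ≤ 100 * (numRows a * b) := by
    exact_mod_cast (by nlinarith : 12 * (a * b) ≤ 100 * (numRows a * b))
  have hrounding : 2.6 * (numRows a : ℝ) - 20.2 ≤ 0.0383 * (numRows a * b) := by
    rcases le_or_gt (numRows a) 11 with hV | hV
    · have hV' : (numRows a : ℝ) ≤ 11 := by exact_mod_cast hV
      have hXcast : (240 : ℝ) ≤ numRows a * b := by exact_mod_cast hX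
      linarith
    · have hb' : (93 : ℝ) ≤ b := by exact_mod_cast (by omega : 93 ≤ b)
      nlinarith [(numRows a).cast_nonneg (α := ℝ)]
  linarith

theorem mul_primeCounting_S_le_piStar_of_lt_100 {a b : ℕ} (ha : 19 ≤ a) (ha' : a < 100)
    (hab : a < b) (h : a.Coprime b) (hb : 200 ≤ b) (hb' : b < 30000000) :
    0.04 * (primeCounting (S a b) : ℝ) ≤ piStar a b := by
  have hpos : 0 < (a : ℝ) * b := by exact_mod_cast (by nlinarith : 0 < a * b)
  have hV := le_numRows a
  have hV' : (3 : ℝ) ≤ numRows a := by exact_mod_cast (by omega : 3 ≤ numRows a)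
  suffices hM : ∃ M b₀ : ℝ, log ((a : ℝ) * b) ≤ M ∧ 0 < b₀ ∧ b₀ ≤ b ∧
      (0.025 + 4.2 / b₀) * M ≤ 0.5501 + (0.92129 * 1.83 - 0.7394) / M by
    obtain ⟨M, b₀, hM, hb₀, hb₀b, hfin⟩ := hM
    exact mul_primeCounting_S_le_piStar_of_wheelWeight_le (by omega) hab h hV (by nlinarith)
      (le_log_div_numRows_of_19_le ha) (by norm_num) (wheelWeight_numRows_le_of_lt_100 ha ha')
      (by norm_num) (by linarith) hM hb₀ hb₀b hfin
  rcases lt_or_ge b 3000 with h3000 | h3000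
  · have hlog := log_le_of_le_two_pow_mul_three_pow_mul_five_pow 5 1 5 hpos
      (by norm_num; exact_mod_cast (by nlinarith : a * b ≤ 300000))
    refine ⟨12.62, 200, hlog.trans (by norm_num), by norm_num, by exact_mod_cast hb, by norm_num⟩
  · have hlog := log_le_of_le_two_pow_mul_three_pow_mul_five_pow 9 1 9 hpos
      (by norm_num; exact_mod_cast (by nlinarith : a * b ≤ 3000000000))
    refine ⟨21.83, 3000, hlog.trans (by norm_num), by norm_num, by exact_mod_cast h3000,
      by norm_num⟩

theorem mul_primeCounting_S_le_piStar_of_lt_1000 {a b : ℕ} (ha : 100 ≤ a) (ha' : a < 1000)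
    (hab : a < b) (h : a.Coprime b) (hb : b < 30000000) :
    0.04 * (primeCounting (S a b) : ℝ) ≤ piStar a b := by
  have hpos : 0 < (a : ℝ) * b := by exact_mod_cast (by nlinarith : 0 < a * b)
  have hV := le_numRows a
  have hV' : (12 : ℝ) ≤ numRows a := by exact_mod_cast (by omega : 12 ≤ numRows a)
  suffices hM : ∃ M b₀ : ℝ, log ((a : ℝ) * b) ≤ M ∧ 0 < b₀ ∧ b₀ ≤ b ∧
      (0.0181 + 3 / b₀) * M ≤ 0.5501 + (0.92129 * 2.03 - 0.7394) / M by
    obtain ⟨M, b₀, hM, hb₀, hb₀b, hfin⟩ := hM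
    exact mul_primeCounting_S_le_piStar_of_wheelWeight_le (by omega) hab h hV (by nlinarith)
      (le_log_div_numRows_of_100_le ha) (by norm_num) (wheelWeight_numRows_le_of_100_le ha)
      (by norm_num) (by linarith) hM hb₀ hb₀b hfin
  rcases lt_or_ge b 200 with h200 | h200
  · have hlog := log_le_of_le_two_pow_mul_three_pow_mul_five_pow 6 0 4 hpos
      (by norm_num; exact_mod_cast (by nlinarith : a * b ≤ 40000))
    refine ⟨10.6, 100, hlog.trans (by norm_num), by norm_num,
      by exact_mod_cast (by omega : 100 ≤ b), by norm_num⟩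
  rcases lt_or_ge b 3000 with h3000 | h3000
  · have hlog := log_le_of_le_two_pow_mul_three_pow_mul_five_pow 6 1 6 hpos
      (by norm_num; exact_mod_cast (by nlinarith : a * b ≤ 3000000))
    refine ⟨14.92, 200, hlog.trans (by norm_num), by norm_num, by exact_mod_cast h200,
      by norm_num⟩
  · have hlog := log_le_of_le_two_pow_mul_three_pow_mul_five_pow 10 1 10 hpos
      (by norm_num; exact_mod_cast (by nlinarith : a * b ≤ 30000000000))
    refine ⟨24.2, 3000, hlog.trans (by norm_num), by norm_num, by exact_mod_cast h3000,
      by norm_num⟩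

theorem mul_primeCounting_S_le_piStar_of_1000_le {a b : ℕ} (ha : 1000 ≤ a) (hab : a < b)
    (h : a.Coprime b) (hb : b < 30000000) :
    0.04 * (primeCounting (S a b) : ℝ) ≤ piStar a b := by
  have hpos : 0 < (a : ℝ) * b := by exact_mod_cast (by nlinarith : 0 < a * b)
  have hV := le_numRows a
  have hV' : (120 : ℝ) ≤ numRows a := by exact_mod_cast (by omega : 120 ≤ numRows a)
  suffices hM : ∃ M b₀ : ℝ, log ((a : ℝ) * b) ≤ M ∧ 0 < b₀ ∧ b₀ ≤ b ∧
      (0.01615 + 2.64 / b₀) * M ≤ 0.5501 + (0.92129 * 2.09 - 0.7394) / M by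
    obtain ⟨M, b₀, hM, hb₀, hb₀b, hfin⟩ := hM
    exact mul_primeCounting_S_le_piStar_of_wheelWeight_le (by omega) hab h hV (by nlinarith)
      (le_log_div_numRows_of_1000_le ha) (by norm_num) (wheelWeight_numRows_le_of_1000_le ha)
      (by norm_num) (by linarith) hM hb₀ hb₀b hfin
  rcases lt_or_ge b 100000 with h100000 | h100000
  · have hlog := log_le_of_le_two_pow_mul_three_pow_mul_five_pow 10 0 10 hpos
      (by norm_num; exact_mod_cast (by nlinarith : a * b ≤ 10000000000))
    refine ⟨23.1, 1000, hlog.trans (by norm_num), by norm_num,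
      by exact_mod_cast (by omega : 1000 ≤ b), by norm_num⟩
  · have hlog := log_le_of_le_two_pow_mul_three_pow_mul_five_pow 14 2 14 hpos
      (by norm_num; exact_mod_cast (by nlinarith : a * b ≤ 900000000000000))
    refine ⟨34.44, 100000, hlog.trans (by norm_num), by norm_num, by exact_mod_cast h100000,
      by norm_num⟩

theorem primeCounting_le_primeCounting_sub_one_add_one (n : ℕ) :
    primeCounting n ≤ primeCounting (n - 1) + 1 := by
  rw [Nat.primeCounting_sub_one, Nat.primeCounting_eq_primeCounting'_succ, Nat.primeCounting',
    Nat.count_succ]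
  gcongr
  split_ifs <;> norm_num

theorem mul_sq_log_eighteen_mul_le {t : ℝ} (ht : 400 ≤ t) :
    7.4 * log (18 * t) ^ 2 ≤ t * (0.11957 * log (18 * t) + 1.065) := by
  have hlog := log_le_of_le_two_pow_mul_three_pow_mul_five_pow 5 2 2 (x := 7200) (by norm_num)
    (by norm_num)
  have htangent := mul_log_le_mul_log_add_sub (x := 18 * t) (y := 7200) (by positivity)
    (by norm_num)
  norm_num at hlog
  have hL : log (18 * t) ≤ 7.882 + t / 400 := by linarith
  have hL0 : 0 ≤ log (18 * t) := log_nonneg (by linarith)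
  nlinarith

theorem mul_primeCounting_S_le_piStar_of_le_eighteen {a b : ℕ} (ha : 2 ≤ a) (ha' : a ≤ 18)
    (hab : a < b) (h : a.Coprime b) (hb : 400 ≤ b) :
    0.04 * (primeCounting (S a b) : ℝ) ≤ piStar a b := by
  have hb' : (400 : ℝ) ≤ b := by exact_mod_cast hb
  have hlower : (primeCounting b : ℝ) ≤ piStar a b + 2 := by
    have hprimes := primeCounting_sub_one_le_piStar_add_one ha hab h
    have hlast := primeCounting_le_primeCounting_sub_one_add_one b
    exact_mod_cast (by omega : primeCounting b ≤ piStar a b + 2)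
  have hSb : S a b ≤ 18 * b := (S_le_mul a b).trans (Nat.mul_le_mul_right b ha')
  have hS := primeCounting_le_of_le hSb (by omega)
  have hL : 0 < log (18 * (b : ℝ)) := log_pos (by linarith)
  have hπ : 0.92129 * (b / log (18 * b) + 2.89 * (b / log (18 * b) ^ 2)) - 5 ≤
      primeCounting b := by
    refine le_primeCounting_of_log_add_le (by omega) hL ?_
    rw [log_mul (by norm_num) (by positivity)]
    linarith [le_log_eighteen]
  have hkey : 7.4 ≤ 0.11957 * (b / log (18 * b)) + 1.065 * (b / log (18 * b) ^ 2) := by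
    refine ((le_div_iff₀ (by positivity)).2 (mul_sq_log_eighteen_mul_le hb')).trans_eq ?_
    field_simp
  have hnonneg : 0 ≤ (b : ℝ) / log (18 * b) ^ 2 := by positivity
  have hnonneg' : 0 ≤ (b : ℝ) / log (18 * b) := by positivity
  push_cast [mul_div_assoc] at hS
  linarith

theorem mul_primeCounting_S_le_piStar_of_lt_30000000 {a b : ℕ} (ha : 19 ≤ a) (hab : a < b)
    (h : a.Coprime b) (hb : b < 30000000) (hN : 2000 ≤ a * b) :
    0.04 * (primeCounting (S a b) : ℝ) ≤ piStar a b := by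
  rcases lt_or_ge a 100 with h100 | h100
  · rcases lt_or_ge b 200 with h200 | h200
    · exact mul_primeCounting_S_le_piStar_of_lt_200 ha h100 hab h h200 hN
    · exact mul_primeCounting_S_le_piStar_of_lt_100 ha h100 hab h h200 hb
  rcases lt_or_ge a 1000 with h1000 | h1000
  · exact mul_primeCounting_S_le_piStar_of_lt_1000 h100 h1000 hab h hb
  · exact mul_primeCounting_S_le_piStar_of_1000_le h1000 hab h hb

end Ranges

theorem piStar_ge_004_pi (a b : ℕ) (ha : 1 ≤ a) (hab : a < b)
    (h : Nat.Coprime a b) :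
    (0.04 : ℝ) * (Nat.primeCounting (S a b) : ℝ) ≤ (piStar a b : ℝ) := by
  have of_nat (hle : primeCounting (S a b) ≤ 25 * piStar a b) :
      0.04 * (primeCounting (S a b) : ℝ) ≤ piStar a b := by
    have hcast : (primeCounting (S a b) : ℝ) ≤ 25 * piStar a b := by exact_mod_cast hle
    linarith
  rcases ha.eq_or_lt with rfl | ha2
  · have hS : S 1 b = 0 := by simp [S]
    simp [hS]
  rcases le_or_gt (a * b) 2000 with hN | hN
  · exact of_nat (primeCounting_S_le_of_mul_le ha2 hab h hN)
  rcases le_or_gt a 18 with h18 | h18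
  · rcases lt_or_ge b 400 with h400 | h400
    · exact of_nat (primeCounting_S_le_of_le_eighteen ha2 h18 hab h (by nlinarith) h400)
    · exact mul_primeCounting_S_le_piStar_of_le_eighteen ha2 h18 hab h h400
  rcases lt_or_ge b 30000000 with hb | hb
  · exact mul_primeCounting_S_le_piStar_of_lt_30000000 h18 hab h hb hN.le
  · exact mul_primeCounting_S_le_piStar_of_30000000_le h18 hab h hb
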